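/- arXiv:1504.06522 — 3 statements merged into one kernel-verified Lean document; each statement's English description precedes it below -/
import Mathlib

section
/- Fix 1 <= i <= n and m in Z_{>=0}. Let p in D be a Dyck path and let s in Z_{>=0}^{R^+} be a multi-exponent with s_beta = 0 for all beta not in p, and suppose sum_{beta in p} s_beta > M_p(m*omega_i). Then there exist complex constants c_t such that X^s + sum_{t ≺ s} c_t X^t belongs to the ideal I_{m*omega_i}. -/
open scoped Pointwise

/-- A single step in a Dyck path: `α_{p,q} → α_{p,q+1}` or `α_{p,q} → α_{p+1,q}`. -/
def RootStep (a b : ℕ × ℕ) : Prop :=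
  (b.1 = a.1 ∧ b.2 = a.2 + 1) ∨ (b.1 = a.1 + 1 ∧ b.2 = a.2)

/-- `inR n i (p,q)` means that `α_{p,q}` is a positive root of `B_n`
(`1 ≤ p ≤ n`, `p ≤ q ≤ 2n-p`) belonging to `R_i^+`, i.e. `p ≤ i ≤ q`. -/
def inR (n i : ℕ) (a : ℕ × ℕ) : Prop :=
  1 ≤ a.1 ∧ a.1 ≤ i ∧ i ≤ a.2 ∧ a.1 + a.2 ≤ 2 * n

/-- A type 1 Dyck path for `R_i^+` of `B_n`, recorded as the list of its roots. -/
def IsType1 (n i : ℕ) (L : List (ℕ × ℕ)) : Prop :=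
  L ≠ [] ∧ L.Chain' RootStep ∧ (∀ x ∈ L, inR n i x) ∧
    ((L.head? = some (1, i) ∧ L.getLast? = some (i, 2 * n - i - 1)) ∨
     (L.head? = some (1, i + 1) ∧ L.getLast? = some (i, 2 * n - i)))

/-- A type 2 (double) Dyck path for `R_i^+` of `B_n`, recorded as the pair of lists of
roots of its two constituent single paths. -/
def IsType2 (n i : ℕ) (L1 L2 : List (ℕ × ℕ)) : Prop :=
  ∃ j : ℕ, 1 ≤ j ∧ j < i ∧
    L1 ≠ [] ∧ L2 ≠ [] ∧ L1.Chain' RootStep ∧ L2.Chain' RootStep ∧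
    (∀ x ∈ L1, inR n i x) ∧ (∀ x ∈ L2, inR n i x) ∧
    L1.head? = some (1, i) ∧ L2.head? = some (2, i) ∧
    L1.getLast? = some (j, 2 * n - j) ∧ L2.getLast? = some (j + 1, 2 * n - j - 1) ∧
    (∀ x, ¬(x ∈ L1 ∧ x ∈ L2))

/-- The constant `c_i`: `1` if `i = 1` or `i = n`, and `2` if `2 ≤ i ≤ n-1`. -/
def cB (n i : ℕ) : ℕ := if i = 1 ∨ i = n then 1 else 2

/-- `SD n i m` is the set `S(D, m·ω_i)` of lattice points of the Dyck-path polytope: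
multi-exponents `s` supported on `R_i^+` with `∑_{β ∈ p} s_β ≤ m` for every type 1
Dyck path `p` and `∑_{β ∈ p} s_β ≤ m·c_i` for every type 2 Dyck path `p`.
(Elements of a Dyck path are pairwise distinct, so summation over the recording
lists agrees with summation over the underlying set of roots.) -/
def SD (n i m : ℕ) : Set ((ℕ × ℕ) → ℕ) :=
  {s | (∀ β, ¬ inR n i β → s β = 0) ∧
       (∀ L, IsType1 n i L → (L.map s).sum ≤ m) ∧
       (∀ L1 L2, IsType2 n i L1 L2 → ((L1 ++ L2).map s).sum ≤ m * cB n i)}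

/-- `isBRoot n (p,q)`: `α_{p,q}` is a positive root of `B_n`, i.e.
`1 ≤ p ≤ n` and `p ≤ q ≤ 2n - p`. -/
def isBRoot (n : ℕ) (a : ℕ × ℕ) : Prop :=
  1 ≤ a.1 ∧ a.1 ≤ n ∧ a.1 ≤ a.2 ∧ a.1 + a.2 ≤ 2 * n

/-- The coefficient of the simple root `α_j` in the root `α_{p,q}` of `B_n`
(an element of the root lattice, recorded coordinatewise). -/
def rootVec (n : ℕ) (a : ℕ × ℕ) (j : ℕ) : ℤ :=
  if a.2 ≤ n then (if a.1 ≤ j ∧ j ≤ a.2 then 1 else 0)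
  else if a.1 ≤ j ∧ j ≤ 2 * n - a.2 then 1
  else if 2 * n - a.2 < j ∧ j ≤ n then 2 else 0

/-- The total order `≺` on positive roots: `α_{p,q} ≺ α_{s,t}` iff `q < t`, or
`q = t` and `p > s`. -/
def rootLT (a b : ℕ × ℕ) : Prop := a.2 < b.2 ∨ (a.2 = b.2 ∧ b.1 < a.1)

/-- The induced homogeneous reverse lexicographic order on multi-exponents:
`expLT s t` means `s ≺ t`, i.e. `t ≻ s`: either the total degree of `s` is smaller,
or the degrees agree and `t_β < s_β` at the `≺`-smallest root `β` with `s_β ≠ t_β`. -/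
def expLT (s t : (ℕ × ℕ) →₀ ℕ) : Prop :=
  (s.sum fun _ v => v) < (t.sum fun _ v => v) ∨
  ((s.sum fun _ v => v) = (t.sum fun _ v => v) ∧
    ∃ β, t β < s β ∧ ∀ γ, rootLT γ β → s γ = t γ)

/-- The differential operator `∂_ν`: the unique `ℂ`-linear derivation of
`S(n⁻) = ℂ[x_{-β} : β ∈ R⁺]` with `∂_ν x_{-β} = x_{-(β-ν)}` if `β - ν ∈ R⁺`
(difference taken in the root lattice) and `∂_ν x_{-β} = 0` otherwise. -/
noncomputable def dOp (n : ℕ) (ν : ℕ × ℕ) :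
    Derivation ℂ (MvPolynomial (ℕ × ℕ) ℂ) (MvPolynomial (ℕ × ℕ) ℂ) :=
  MvPolynomial.mkDerivation ℂ fun β =>
    letI := Classical.propDecidable
    if h : ∃ γ, isBRoot n γ ∧ ∀ j, rootVec n γ j = rootVec n β j - rootVec n ν j
    then MvPolynomial.X h.choose else 0

/-- The ideal `I_{m·ω_i}`: the smallest ideal of `S(n⁻)` containing
`x_{-θ}^{c_i·m+1}` (θ = α_{1,2n-1} the highest root), `x_{-α_{1,2n-i}}^{m+1}`, and
`x_{-β}` for every `β ∈ R⁺ \ R_i⁺`, and stable under `∂_ν` for every `ν ∈ R⁺`. -/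
noncomputable def Ilam (n i m : ℕ) : Ideal (MvPolynomial (ℕ × ℕ) ℂ) :=
  sInf {I |
    MvPolynomial.X ((1 : ℕ), 2 * n - 1) ^ (cB n i * m + 1) ∈ I ∧
    MvPolynomial.X ((1 : ℕ), 2 * n - i) ^ (m + 1) ∈ I ∧
    (∀ β, isBRoot n β → ¬ inR n i β → MvPolynomial.X β ∈ I) ∧
    (∀ ν, isBRoot n ν → ∀ f ∈ I, dOp n ν f ∈ I)}

/-!
A root of `R_i^+` is a sum of two letters `1, …, 2n + 1`, the weights of the vector representation.
A multi-exponent with many roots on a Dyck path is thus a filling with two columns of letters.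
Replacing all first letters by `1` and all second letters by a suitable `c` turns its monomial into
a power of one variable which lies in the ideal by definition. Applying operators `∂_ν` to this
power changes the letters back one at a time. By the Leibniz rule each step also produces other
monomials, but only with non-negative coefficients, so the desired monomial cannot cancel. The
columns control the other monomials: a pass over the first column fixes its letters exactly,
and a monomial surviving the pass over the second column has the desired second letters or larger
ones. Since the Dyck path makes the desired filling nested, it is extremal among the fillings
with such columns, which is the order `≺` of the theorem.
-/

open MvPolynomial

section PositiveStraightening

variable {R A τ : Type*} [CommSemiring R] [CommRing A] [Algebra R A]

/-- Sums of elements of `I` and of products of the `v z` over multisets with property `P`. The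
products enter without subtraction, so no cancellation can occur among them. -/
def positiveCone (I : Ideal A) (v : τ → A) (P : Multiset τ → Prop) : AddSubmonoid A :=
  AddSubmonoid.closure ((fun T => (T.map v).prod) '' {T | P T} ∪ I)

/-- The product of the `v z` over `T` can be written modulo `I` as minus a sum of such products over
multisets with property `P`, which `T` has as well. -/
def HasStraightening (I : Ideal A) (v : τ → A) (P : Multiset τ → Prop) (T : Multiset τ) : Prop :=
  P T ∧ ∃ f ∈ positiveCone I v P, (T.map v).prod + f ∈ I

variable {I : Ideal A} {v : τ → A} {P Q : Multiset τ → Prop}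

lemma positiveCone_le_iff {M : AddSubmonoid A} :
    positiveCone I v P ≤ M ↔ (∀ T, P T → (T.map v).prod ∈ M) ∧ ∀ f ∈ I, f ∈ M := by
  simp only [positiveCone, AddSubmonoid.closure_le, Set.union_subset_iff, Set.image_subset_iff]
  rfl

lemma prod_mem_positiveCone {T : Multiset τ} (hT : P T) :
    (T.map v).prod ∈ positiveCone I v P :=
  (positiveCone_le_iff.1 le_rfl).1 T hT

lemma mem_positiveCone_of_mem {f : A} (hf : f ∈ I) : f ∈ positiveCone I v P :=
  (positiveCone_le_iff.1 le_rfl).2 f hf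

lemma mul_mem_positiveCone {z : τ} {f : A}
    (hf : f ∈ positiveCone I v fun T => Q (z ::ₘ T)) : v z * f ∈ positiveCone I v Q := by
  suffices positiveCone I v (fun T => Q (z ::ₘ T)) ≤
      (positiveCone I v Q).comap (AddMonoidHom.mulLeft (v z)) from this hf
  refine positiveCone_le_iff.2 ⟨fun T hT => ?_, fun f hf => ?_⟩
  · simpa using prod_mem_positiveCone (I := I) (v := v) hT
  · exact mem_positiveCone_of_mem (I.mul_mem_left _ hf)

lemma derivation_prod_mem_positiveCone {D : Derivation R A A} {T : Multiset τ}
    (h : ∀ z U, T = z ::ₘ U → D (v z) ∈ I ∨ ∃ z', D (v z) = v z' ∧ Q (z' ::ₘ U)) :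
    D (T.map v).prod ∈ positiveCone I v Q := by
  induction T using Multiset.induction generalizing Q with
  | empty => simp
  | cons a T ih =>
    rw [Multiset.map_cons, Multiset.prod_cons, D.leibniz, smul_eq_mul, smul_eq_mul]
    refine add_mem (mul_mem_positiveCone (ih fun z U hU => ?_)) ?_
    · simpa only [Multiset.cons_swap] using h z (a ::ₘ U) (by rw [hU, Multiset.cons_swap])
    · rcases h a T rfl with ha | ⟨a', ha, hQ⟩
      · exact mem_positiveCone_of_mem (I.mul_mem_left _ ha)
      · rw [ha, mul_comm, ← Multiset.prod_cons, ← Multiset.map_cons]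
        exact prod_mem_positiveCone hQ

lemma HasStraightening.map {τ' : Type*} {e : τ' → τ} {P : Multiset τ' → Prop} {T : Multiset τ'}
    (h : HasStraightening I (fun z => v (e z)) P T) (hPQ : ∀ U, P U → Q (U.map e)) :
    HasStraightening I v Q (T.map e) := by
  obtain ⟨hT, f, hf, hTf⟩ := h
  have hprod (U : Multiset τ') : (U.map fun z => v (e z)).prod = ((U.map e).map v).prod := by
    rw [Multiset.map_map, Function.comp_def]
  have hle : positiveCone I (fun z => v (e z)) P ≤ positiveCone I v Q := positiveCone_le_iff.2
    ⟨fun U hU => hprod U ▸ prod_mem_positiveCone (hPQ U hU), fun _ => mem_positiveCone_of_mem⟩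
  exact ⟨hPQ T hT, f, hle hf, hprod T ▸ hTf⟩

lemma HasStraightening.mono {T : Multiset τ} (h : HasStraightening I v P T)
    (hPQ : ∀ U, P U → Q U) : HasStraightening I v Q T := by
  simpa only [Multiset.map_id] using h.map (e := id) (Q := Q) fun U hU => by
    simpa only [Multiset.map_id] using hPQ U hU

lemma hasStraightening_of_prod_mem {T : Multiset τ} (hT : P T) (h : (T.map v).prod ∈ I) :
    HasStraightening I v P T :=
  ⟨hT, 0, zero_mem _, by rwa [add_zero]⟩

lemma HasStraightening.derivation {D : Derivation R A A} {z z' : τ} {T : Multiset τ}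
    (h : HasStraightening I v P (z ::ₘ T)) (hD : ∀ f ∈ I, D f ∈ I) (hz : D (v z) = v z')
    (hT : Q (z' ::ₘ T))
    (hPQ : ∀ y U, P (y ::ₘ U) → D (v y) ∈ I ∨ ∃ y', D (v y) = v y' ∧ Q (y' ::ₘ U)) :
    HasStraightening I v Q (z' ::ₘ T) := by
  obtain ⟨hPT, f, hf, hTf⟩ := h
  have hDprod : ∀ U, P U → D (U.map v).prod ∈ positiveCone I v Q := fun U hU =>
    derivation_prod_mem_positiveCone fun y V hUV => hPQ y V (hUV ▸ hU)
  have hDf : D f ∈ positiveCone I v Q := by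
    suffices positiveCone I v P ≤ (positiveCone I v Q).comap (D : A →+ A) from this hf
    exact positiveCone_le_iff.2 ⟨hDprod, fun g hg => mem_positiveCone_of_mem (hD g hg)⟩
  have hDT : v z * D (T.map v).prod ∈ positiveCone I v Q :=
    mul_mem_positiveCone (derivation_prod_mem_positiveCone fun y V hTV => by
      simpa only [Multiset.cons_swap] using
        hPQ y (z ::ₘ V) (by rwa [Multiset.cons_swap, ← hTV]))
  refine ⟨hT, _, add_mem hDT hDf, ?_⟩
  have key := hD _ hTf
  rw [Multiset.map_cons, Multiset.prod_cons, map_add, D.leibniz, hz, smul_eq_mul, smul_eq_mul]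
    at key
  rw [Multiset.map_cons, Multiset.prod_cons]
  convert key using 1
  ring

lemma prod_map_X_eq_monomial {σ K : Type*} [DecidableEq σ] [CommSemiring K] (φ : τ → σ)
    (T : Multiset τ) :
    (T.map fun z => (X (φ z) : MvPolynomial σ K)).prod
      = monomial (Multiset.toFinsupp (T.map φ)) 1 := by
  induction T using Multiset.induction with
  | empty => simp
  | cons z T ih =>
    rw [Multiset.map_cons, Multiset.prod_cons, ih, Multiset.map_cons, ← Multiset.singleton_add,
      map_add, Multiset.toFinsupp_singleton, X, monomial_mul, mul_one]

lemma exists_sub_mem_of_mem_positiveCone {σ K : Type*} [DecidableEq σ] [CommRing K]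
    {I : Ideal (MvPolynomial σ K)} {φ : τ → σ} {s : σ →₀ ℕ} {lt : (σ →₀ ℕ) → (σ →₀ ℕ) → Prop}
    (hP : ∀ U, P U → Multiset.toFinsupp (U.map φ) = s ∨ lt (Multiset.toFinsupp (U.map φ)) s)
    {f : MvPolynomial σ K} (hf : f ∈ positiveCone I (fun z => X (φ z)) P) :
    ∃ (c : ℕ) (r : MvPolynomial σ K), (∀ t ∈ r.support, lt t s) ∧
      f - ((c : MvPolynomial σ K) * monomial s (1 : K) + r) ∈ I := by
  induction hf using AddSubmonoid.closure_induction with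
  | zero => exact ⟨0, 0, by simp, by simp⟩
  | mem f hf =>
    rcases hf with ⟨U, hU, rfl⟩ | hf
    · simp only [prod_map_X_eq_monomial]
      rcases hP U hU with h | h
      · exact ⟨1, 0, by simp, by simp [h]⟩
      · refine ⟨0, monomial (Multiset.toFinsupp (U.map φ)) 1, fun t ht => ?_, by simp⟩
        rwa [Finset.mem_singleton.1 (support_monomial_subset ht)]
    · exact ⟨0, 0, by simp, by simpa using hf⟩
  | add f f' _ _ ih ih' =>
    obtain ⟨c, r, hr, hf⟩ := ih
    obtain ⟨c', r', hr', hf'⟩ := ih'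
    refine ⟨c + c', r + r', fun t ht => ?_, ?_⟩
    · exact (Finset.mem_union.1 (support_add ht)).elim (hr t) (hr' t)
    · convert I.add_mem hf hf' using 1
      push_cast
      ring

lemma HasStraightening.exists_monomial_add_mem {σ K : Type*} [DecidableEq σ] [Field K]
    [CharZero K] {I : Ideal (MvPolynomial σ K)} {φ : τ → σ} {T : Multiset τ}
    {lt : (σ →₀ ℕ) → (σ →₀ ℕ) → Prop} (h : HasStraightening I (fun z => X (φ z)) P T)
    (hP : ∀ U, P U → Multiset.toFinsupp (U.map φ) = Multiset.toFinsupp (T.map φ) ∨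
      lt (Multiset.toFinsupp (U.map φ)) (Multiset.toFinsupp (T.map φ))) :
    ∃ g : MvPolynomial σ K, (∀ t ∈ g.support, lt t (Multiset.toFinsupp (T.map φ))) ∧
      monomial (Multiset.toFinsupp (T.map φ)) 1 + g ∈ I := by
  obtain ⟨-, f, hf, hTf⟩ := h
  obtain ⟨c, r, hr, hfr⟩ := exists_sub_mem_of_mem_positiveCone hP hf
  rw [prod_map_X_eq_monomial] at hTf
  have hc : (1 + c : K) ≠ 0 := by exact_mod_cast (show 1 + c ≠ 0 by omega)
  refine ⟨C (1 + c : K)⁻¹ * r, fun t ht => hr t ?_, ?_⟩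
  · rw [C_mul'] at ht
    exact support_smul ht
  · convert I.mul_mem_left (C (1 + c : K)⁻¹) (I.sub_mem hTf hfr) using 1
    have hC : C (1 + c : K)⁻¹ * (1 + c : MvPolynomial σ K) = 1 := by
      rw [← map_natCast (C (σ := σ) (R := K)), ← map_one C, ← map_add, ← map_mul,
        inv_mul_cancel₀ hc, map_one]
    linear_combination (-monomial (Multiset.toFinsupp (T.map φ)) (1 : K)) * hC

end PositiveStraightening

/-! ### Differences of roots -/

section RootDifferences

/-- The positive root `γ` is the difference `β - ν` in the root lattice; this is the condition under
which `dOp n ν` sends `X β` to `X γ`. -/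
def RootDiff (n : ℕ) (ν β γ : ℕ × ℕ) : Prop :=
  isBRoot n γ ∧ ∀ j, rootVec n γ j = rootVec n β j - rootVec n ν j

/-- A linear functional on the weight lattice, recorded by its values at the letters `1, …, 2n + 1`,
which stand for the weights of the vector representation: the letter `k ≤ n` is `ε_k`, the letter
`n + 1` is `0`, and `2n + 2 - k` is the negative of `k`. -/
def OddFun (n : ℕ) (U : ℕ → ℤ) : Prop :=
  ∀ k, k ≤ 2 * n + 2 → U (2 * n + 2 - k) = -U k

/-- The value at the root `α_{p,q}` of the functional `U`: the root is the sum of the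
letters `p` and `2n + 1 - q`. -/
def letterSum (n : ℕ) (U : ℕ → ℤ) (β : ℕ × ℕ) : ℤ := U β.1 + U (2 * n + 1 - β.2)

/-- The fundamental coweight reading off the coefficient of the simple root `α_j`. -/
def coweight (n j k : ℕ) : ℤ :=
  if j ≤ n then (if k ≤ j then 1 else 0) - (if 2 * n + 2 ≤ k + j then 1 else 0) else 0

/-- The coordinate functional dual to the letter `c`. -/
def letterCoord (n c k : ℕ) : ℤ :=
  (if k = c then 1 else 0) - (if k + c = 2 * n + 2 then 1 else 0)

variable {n : ℕ} {β γ ν : ℕ × ℕ} {U : ℕ → ℤ}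

lemma oddFun_linear (n : ℕ) : OddFun n fun k => (n : ℤ) + 1 - k := by
  intro k hk
  push_cast [Nat.cast_sub hk]
  ring

lemma oddFun_letterCoord {c : ℕ} (hc : c ≤ n) : OddFun n (letterCoord n c) := by
  intro k hk
  unfold letterCoord
  split_ifs <;> omega

lemma letterCoord_self {c : ℕ} (hc : c ≤ n) : letterCoord n c c = 1 := by
  unfold letterCoord
  split_ifs <;> omega

lemma letterCoord_nonpos {c k : ℕ} (h : k ≠ c) : letterCoord n c k ≤ 0 := by
  unfold letterCoord
  split_ifs <;> omega

lemma letterCoord_nonneg {c k : ℕ} (h : k + c ≠ 2 * n + 2) : 0 ≤ letterCoord n c k := by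
  unfold letterCoord
  split_ifs <;> omega

lemma letterCoord_eq_zero {c k : ℕ} (h : k ≠ c) (h' : k + c ≠ 2 * n + 2) :
    letterCoord n c k = 0 :=
  le_antisymm (letterCoord_nonpos h) (letterCoord_nonneg h')

lemma oddFun_coweight (n j : ℕ) : OddFun n (coweight n j) := by
  intro k hk
  unfold coweight
  split_ifs <;> omega

lemma OddFun.apply_middle (hU : OddFun n U) : U (n + 1) = 0 := by
  have h := hU (n + 1) (by omega)
  rw [show 2 * n + 2 - (n + 1) = n + 1 by omega] at h
  omega

lemma rootVec_eq_letterSum (h : isBRoot n β) (j : ℕ) :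
    rootVec n β j = letterSum n (coweight n j) β := by
  obtain ⟨h1, _, h3, h4⟩ := h
  unfold rootVec letterSum coweight
  split_ifs <;> omega

lemma OddFun.eq_sum_letterCoord (hU : OddFun n U) {k : ℕ} (hk : 1 ≤ k) (hk' : k ≤ 2 * n + 1) :
    U k = ∑ c ∈ Finset.Icc 1 n, U c * letterCoord n c k := by
  have hterm : ∀ c ∈ Finset.Icc 1 n, U c * letterCoord n c k =
      (if c = k then U c else 0) - (if c = 2 * n + 2 - k then U c else 0) := fun c _ => by
    have h1 : k = c ↔ c = k := eq_comm
    have h2 : k + c = 2 * n + 2 ↔ c = 2 * n + 2 - k := by omega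
    simp only [letterCoord, h1, h2, mul_sub, mul_ite, mul_one, mul_zero]
  rw [Finset.sum_congr rfl hterm, Finset.sum_sub_distrib, Finset.sum_ite_eq', Finset.sum_ite_eq']
  simp only [Finset.mem_Icc]
  rcases lt_trichotomy k (n + 1) with hlt | rfl | hgt
  · rw [if_pos (by omega), if_neg (by omega), sub_zero]
  · rw [if_neg (by omega), if_neg (by omega), hU.apply_middle, sub_zero]
  · rw [if_neg (by omega), if_pos (by omega), hU k (by omega), zero_sub, neg_neg]

lemma letterSum_eq_sum_rootVec (h : isBRoot n β) (hU : OddFun n U) :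
    letterSum n U β =
      ∑ c ∈ Finset.Icc 1 n, U c * (rootVec n β c - rootVec n β (c - 1)) := by
  have hcoord : ∀ c ∈ Finset.Icc 1 n, ∀ k,
      coweight n c k - coweight n (c - 1) k = letterCoord n c k := fun c hc k => by
    rw [Finset.mem_Icc] at hc
    unfold coweight letterCoord
    split_ifs <;> omega
  obtain ⟨h1, _, _, h4⟩ := id h
  rw [letterSum, hU.eq_sum_letterCoord h1 (by omega),
    hU.eq_sum_letterCoord (k := 2 * n + 1 - β.2) (by omega) (by omega), ← Finset.sum_add_distrib]
  refine Finset.sum_congr rfl fun c hc => ?_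
  rw [rootVec_eq_letterSum h, rootVec_eq_letterSum h, letterSum, letterSum, ← hcoord c hc,
    ← hcoord c hc]
  ring

lemma rootDiff_iff (hν : isBRoot n ν) (hβ : isBRoot n β) :
    RootDiff n ν β γ ↔ isBRoot n γ ∧
      ∀ U, OddFun n U → letterSum n U γ = letterSum n U β - letterSum n U ν := by
  refine and_congr_right fun hγ => ⟨fun h U hU => ?_, fun h j => ?_⟩
  · rw [letterSum_eq_sum_rootVec hγ hU, letterSum_eq_sum_rootVec hβ hU,
      letterSum_eq_sum_rootVec hν hU, ← Finset.sum_sub_distrib]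
    refine Finset.sum_congr rfl fun c _ => ?_
    rw [h, h]
    ring
  · rw [rootVec_eq_letterSum hγ, rootVec_eq_letterSum hβ, rootVec_eq_letterSum hν]
    exact h _ (oddFun_coweight n j)

lemma isBRoot.ext (h : isBRoot n β) (h' : isBRoot n γ)
    (hβγ : ∀ j, rootVec n β j = rootVec n γ j) : β = γ := by
  have key : ∀ U, OddFun n U → letterSum n U β = letterSum n U γ := fun U hU => by
    simp only [letterSum_eq_sum_rootVec h hU, letterSum_eq_sum_rootVec h' hU, hβγ]
  obtain ⟨h1, h2, _, h4⟩ := h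
  obtain ⟨h1', h2', h3', h4'⟩ := h'
  have hlinear := key _ (oddFun_linear n)
  have hcoord := key _ (oddFun_letterCoord h2)
  simp only [letterSum, letterCoord] at hlinear hcoord
  rw [Prod.ext_iff]
  split_ifs at hcoord <;> omega

lemma RootDiff.unique {γ' : ℕ × ℕ} (h : RootDiff n ν β γ) (h' : RootDiff n ν β γ') : γ = γ' :=
  h.1.ext h'.1 fun j => (h.2 j).trans (h'.2 j).symm

lemma dOp_X_of_rootDiff (h : RootDiff n ν β γ) : dOp n ν (X β) = X γ := by
  have hex : ∃ γ, isBRoot n γ ∧ ∀ j, rootVec n γ j = rootVec n β j - rootVec n ν j := ⟨γ, h⟩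
  unfold dOp
  rw [mkDerivation_X, dif_pos hex]
  exact congrArg _ (RootDiff.unique hex.choose_spec h)

lemma dOp_X_of_not_rootDiff (h : ¬ ∃ γ, RootDiff n ν β γ) : dOp n ν (X β) = 0 := by
  unfold dOp
  rw [mkDerivation_X]
  exact dif_neg h

end RootDifferences

section Ideal

variable {n i m k : ℕ} {β ν : ℕ × ℕ}

lemma inR.isBRoot (hin : i ≤ n) (h : inR n i β) : isBRoot n β :=
  ⟨h.1, h.2.1.trans hin, h.2.1.trans h.2.2.1, h.2.2.2⟩

lemma X_mem_Ilam (m : ℕ) (h : isBRoot n β) (h' : ¬ inR n i β) : X β ∈ Ilam n i m :=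
  Submodule.mem_sInf.2 fun _ hI => hI.2.2.1 β h h'

lemma dOp_mem_Ilam (hν : isBRoot n ν) {f : MvPolynomial (ℕ × ℕ) ℂ} (hf : f ∈ Ilam n i m) :
    dOp n ν f ∈ Ilam n i m :=
  Submodule.mem_sInf.2 fun I hI => hI.2.2.2 ν hν f (Submodule.mem_sInf.1 hf I hI)

lemma X_highest_pow_mem_Ilam (hk : m * cB n i < k) : X (1, 2 * n - 1) ^ k ∈ Ilam n i m :=
  Submodule.mem_sInf.2 fun _ hI => Ideal.pow_mem_of_pow_mem _ hI.1 (by rwa [mul_comm])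

lemma X_pow_mem_Ilam (hk : m < k) : X (1, 2 * n - i) ^ k ∈ Ilam n i m :=
  Submodule.mem_sInf.2 fun _ hI => Ideal.pow_mem_of_pow_mem _ hI.2.1 hk

lemma dOp_X_mem_Ilam_or (m : ℕ) (ν β : ℕ × ℕ) :
    dOp n ν (X β) ∈ Ilam n i m ∨
      ∃ γ, inR n i γ ∧ RootDiff n ν β γ ∧ dOp n ν (X β) = X γ := by
  by_cases h : ∃ γ, RootDiff n ν β γ
  · obtain ⟨γ, hγ⟩ := h
    have hX := dOp_X_of_rootDiff hγ
    by_cases hR : inR n i γ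
    · exact Or.inr ⟨γ, hR, hγ, hX⟩
    · exact Or.inl (hX ▸ X_mem_Ilam m hγ.1 hR)
  · rw [dOp_X_of_not_rootDiff h]
    exact Or.inl (zero_mem _)

end Ideal

/-! ### Roots as pairs of letters -/

section LetterPairs

/-- The root of `B_n` that is the sum of the two letters of `z`. Both orders of the letters give the
same root. -/
def pairRoot (n : ℕ) (z : ℕ × ℕ) : ℕ × ℕ := (min z.1 z.2, 2 * n + 1 - max z.1 z.2)

/-- The pairs of letters that occur in the straightening: their root lies in `R_i^+`, and the letter
`1` does not come second. -/
def IsLetterPair (n i : ℕ) (z : ℕ × ℕ) : Prop := inR n i (pairRoot n z) ∧ 2 ≤ z.2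

/-- The two effects of subtracting the root `α_{c, w - 1} = ε_c - ε_w` from `ε_1 + ε_y`: the
letter `c` becomes `w`, or the letter opposite to `w` becomes the one opposite to `c`. -/
def ColMove (n c w y y' : ℕ) : Prop :=
  y = c ∧ y' = w ∨ y = 2 * n + 2 - w ∧ y' = 2 * n + 2 - c

variable {n i a c w x y y' : ℕ} {z γ : ℕ × ℕ} {U : ℕ → ℤ}

lemma pairRoot_swap (n : ℕ) (z : ℕ × ℕ) : pairRoot n z.swap = pairRoot n z := by
  simp only [pairRoot, Prod.fst_swap, Prod.snd_swap, min_comm, max_comm]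

lemma inR_pairRoot_iff : inR n i (pairRoot n z) ↔
    1 ≤ min z.1 z.2 ∧ min z.1 z.2 ≤ i ∧ max z.1 z.2 + i ≤ 2 * n + 1 ∧ z.1 ≠ z.2 := by
  unfold inR pairRoot
  omega

lemma isLetterPair_one_left (hi : 1 ≤ i) (hy : 2 ≤ y) (hy' : y + i ≤ 2 * n + 1) :
    IsLetterPair n i (1, y) :=
  ⟨inR_pairRoot_iff.2 (by dsimp only; omega), hy⟩

lemma letterSum_pairRoot (U : ℕ → ℤ) (hz : max z.1 z.2 ≤ 2 * n + 1) :
    letterSum n U (pairRoot n z) = U z.1 + U z.2 := by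
  rw [letterSum, pairRoot, show 2 * n + 1 - (2 * n + 1 - max z.1 z.2) = max z.1 z.2 by omega]
  rcases le_total z.1 z.2 with h | h
  · rw [min_eq_left h, max_eq_right h]
  · rw [min_eq_right h, max_eq_left h, add_comm]

lemma letterSum_sub_one (hU : OddFun n U) (c : ℕ) (hw : 1 ≤ w) (hw' : w ≤ 2 * n + 1) :
    letterSum n U (c, w - 1) = U c - U w := by
  rw [letterSum, show 2 * n + 1 - (w - 1) = 2 * n + 2 - w by omega, hU w (by omega),
    sub_eq_add_neg]

lemma RootDiff.letterSum_eq (hν : isBRoot n (c, w - 1)) (hz : isBRoot n (pairRoot n z))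
    (h : RootDiff n (c, w - 1) (pairRoot n z) γ) (hU : OddFun n U) :
    letterSum n U γ = U z.1 + U z.2 - (U c - U w) := by
  rw [((rootDiff_iff hν hz).1 h).2 U hU]
  obtain ⟨hν1, -, hν3, hν4⟩ := hν
  obtain ⟨hz1, -, hz3, -⟩ := hz
  dsimp only [pairRoot] at hν1 hν3 hν4 hz1 hz3
  rw [letterSum_pairRoot U (by omega), letterSum_sub_one hU c (by omega) (by omega)]

lemma rootDiff_row (hin : i ≤ n) (ha : 2 ≤ a) (hz : IsLetterPair n i (a, y)) :
    RootDiff n (1, a - 1) (pairRoot n (1, y)) (pairRoot n (a, y)) := by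
  obtain ⟨h1, h2, h3, h4⟩ := inR_pairRoot_iff.1 hz.1
  have hy : 2 ≤ y := hz.2
  dsimp only at h1 h2 h3 h4
  refine (rootDiff_iff ?_ ?_).2 ⟨hz.1.isBRoot hin, fun U hU => ?_⟩
  · unfold isBRoot
    omega
  · exact (isLetterPair_one_left (by omega) hy (by omega)).1.isBRoot hin
  · rw [letterSum_pairRoot U (by dsimp only; omega), letterSum_pairRoot U (by dsimp only; omega),
      letterSum_sub_one hU 1 (by omega) (by omega)]
    ring

lemma RootDiff.row_cases (hin : i ≤ n) (ha : 2 ≤ a) (ha' : a + i ≤ 2 * n + 1)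
    (hz : IsLetterPair n i z) (hγ : inR n i γ) (h : RootDiff n (1, a - 1) (pairRoot n z) γ) :
    z.1 = 1 ∧ γ = pairRoot n (a, z.2) := by
  obtain ⟨x, y⟩ := z
  obtain ⟨p, q⟩ := γ
  obtain ⟨h1, h2, h3, h4⟩ := inR_pairRoot_iff.1 hz.1
  have hy : 2 ≤ y := hz.2
  obtain ⟨g1, g2, g3, g4⟩ := id hγ
  dsimp only at h1 h2 h3 h4 g1 g2 g3 g4 ⊢
  have hν : isBRoot n (1, a - 1) := ⟨le_rfl, by omega, by dsimp only; omega, by dsimp only; omega⟩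
  have key : ∀ U, OddFun n U → U p + U (2 * n + 1 - q) = U x + U y - (U 1 - U a) := fun _ hU =>
    h.letterSum_eq hν (hz.1.isBRoot hin) hU
  have hlinear := key _ (oddFun_linear n)
  have hone := key _ (oddFun_letterCoord (show 1 ≤ n by omega))
  have hfst := key _ (oddFun_letterCoord (g2.trans hin))
  rw [letterCoord_eq_zero (by omega : 2 * n + 1 - q ≠ 1) (by omega), letterCoord_self (by omega),
    letterCoord_eq_zero (by omega : y ≠ 1) (by omega),
    letterCoord_eq_zero (by omega : a ≠ 1) (by omega)] at hone
  have hx : x = 1 := by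
    by_contra hne
    have := letterCoord_nonpos (n := n) hne
    have := letterCoord_nonneg (by omega : p + 1 ≠ 2 * n + 2)
    omega
  subst hx
  have hp : p ≠ 1 := by
    rintro rfl
    rw [letterCoord_self (by omega)] at hone
    omega
  rw [letterCoord_self (by omega), letterCoord_eq_zero (by omega : 2 * n + 1 - q ≠ p) (by omega),
    letterCoord_eq_zero hp.symm (by omega)] at hfst
  have hap : p = a ∨ p = y := by
    by_contra! hne
    have := letterCoord_nonpos (n := n) hne.1.symm
    have := letterCoord_nonpos (n := n) hne.2.symm
    omega
  refine ⟨rfl, ?_⟩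
  simp only [pairRoot, Prod.mk.injEq]
  omega

lemma ColMove.rootDiff (hi : 1 ≤ i) (hin : i ≤ n) (hc : 2 ≤ c) (hcw : c < w)
    (hw : c + w ≤ 2 * n + 1) (hy : IsLetterPair n i (1, y)) (hy' : IsLetterPair n i (1, y'))
    (h : ColMove n c w y y') :
    RootDiff n (c, w - 1) (pairRoot n (1, y)) (pairRoot n (1, y')) := by
  obtain ⟨-, -, h3, -⟩ := inR_pairRoot_iff.1 hy.1
  obtain ⟨-, -, h3', -⟩ := inR_pairRoot_iff.1 hy'.1
  dsimp only at h3 h3'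
  have hν : isBRoot n (c, w - 1) := ⟨by omega, by dsimp only; omega, by dsimp only; omega,
    by dsimp only; omega⟩
  refine (rootDiff_iff hν (hy.1.isBRoot hin)).2 ⟨hy'.1.isBRoot hin, fun U hU => ?_⟩
  rw [letterSum_pairRoot U (by dsimp only; omega), letterSum_pairRoot U (by dsimp only; omega),
    letterSum_sub_one hU c (by omega) (by omega)]
  rcases h with ⟨rfl, rfl⟩ | ⟨rfl, rfl⟩
  · ring
  · rw [hU c (by omega), hU w (by omega)]
    ring

lemma RootDiff.colMove (hin : i ≤ n) (hc : 2 ≤ c) (hcn : c ≤ n) (hcw : c < w)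
    (hw : c + w ≤ 2 * n + 1) (hy : IsLetterPair n i (1, y)) (hγ : inR n i γ)
    (h : RootDiff n (c, w - 1) (pairRoot n (1, y)) γ) :
    ∃ y', ColMove n c w y y' ∧ IsLetterPair n i (1, y') ∧ γ = pairRoot n (1, y') := by
  obtain ⟨p, q⟩ := γ
  obtain ⟨-, h2, h3, -⟩ := inR_pairRoot_iff.1 hy.1
  have hy2 : 2 ≤ y := hy.2
  obtain ⟨g1, g2, g3, g4⟩ := id hγ
  dsimp only at h2 h3 g1 g2 g3 g4
  have hν : isBRoot n (c, w - 1) := ⟨by omega, hcn, by dsimp only; omega, by dsimp only; omega⟩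
  have key : ∀ U, OddFun n U → U p + U (2 * n + 1 - q) = U 1 + U y - (U c - U w) := fun _ hU =>
    h.letterSum_eq hν (hy.1.isBRoot hin) hU
  have hlinear := key _ (oddFun_linear n)
  have hone := key _ (oddFun_letterCoord (show 1 ≤ n by omega))
  have hcoord := key _ (oddFun_letterCoord hcn)
  rw [letterCoord_eq_zero (by omega : 2 * n + 1 - q ≠ 1) (by omega), letterCoord_self (by omega),
    letterCoord_eq_zero (by omega : y ≠ 1) (by omega),
    letterCoord_eq_zero (by omega : c ≠ 1) (by omega),
    letterCoord_eq_zero (by omega : w ≠ 1) (by omega)] at hone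
  have hp : p = 1 := by
    by_contra hne
    have := letterCoord_nonpos (n := n) hne
    omega
  subst hp
  rw [letterCoord_eq_zero (by omega : 1 ≠ c) (by omega), letterCoord_self hcn,
    letterCoord_eq_zero (by omega : w ≠ c) (by omega)] at hcoord
  have hcases : y = c ∨ 2 * n + 1 - q + c = 2 * n + 2 := by
    by_contra! hne
    have := letterCoord_nonpos (n := n) hne.1
    have := letterCoord_nonneg hne.2
    omega
  refine ⟨2 * n + 1 - q, by unfold ColMove; omega, isLetterPair_one_left g2 ?_ (by omega), ?_⟩
  · omega
  · simp only [pairRoot, Prod.mk.injEq]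
    omega

end LetterPairs

/-! ### Subtracting roots from products of variables -/

section Moves

variable {n i m : ℕ} {τ : Type*}

lemma HasStraightening.subtractRoot {φ : τ → ℕ × ℕ} {P Q : Multiset τ → Prop} {ν : ℕ × ℕ}
    {z z' : τ} {T : Multiset τ} (hν : isBRoot n ν)
    (h : HasStraightening (Ilam n i m) (fun z => X (φ z)) P (z ::ₘ T))
    (hz : RootDiff n ν (φ z) (φ z')) (hT : Q (z' ::ₘ T))
    (hPQ : ∀ y U γ, P (y ::ₘ U) → inR n i γ → RootDiff n ν (φ y) γ →
      ∃ y', γ = φ y' ∧ Q (y' ::ₘ U)) :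
    HasStraightening (Ilam n i m) (fun z => X (φ z)) Q (z' ::ₘ T) := by
  refine h.derivation (fun _ => dOp_mem_Ilam hν) (dOp_X_of_rootDiff hz) hT fun y U hyU => ?_
  refine (dOp_X_mem_Ilam_or m ν (φ y)).imp_right fun ⟨γ, hγ, hdiff, hX⟩ => ?_
  obtain ⟨y', rfl, hQ⟩ := hPQ y U γ hyU hγ hdiff
  exact ⟨y', hX, hQ⟩

/-- `U` consists of letter pairs whose first letters are those of `T₀` and whose second letters
satisfy `Q`: all that the straightening keeps track of. -/
def HasMargins (n i : ℕ) (Q : Multiset ℕ → Prop) (T₀ U : Multiset (ℕ × ℕ)) : Prop :=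
  (∀ z ∈ U, IsLetterPair n i z) ∧ U.map Prod.fst = T₀.map Prod.fst ∧ Q (U.map Prod.snd)

lemma HasStraightening.rowMove {Q : Multiset ℕ → Prop} {a b : ℕ} {T : Multiset (ℕ × ℕ)}
    (hin : i ≤ n) (hab : IsLetterPair n i (a, b))
    (h : HasStraightening (Ilam n i m) (fun z => X (pairRoot n z))
      (HasMargins n i Q ((1, b) ::ₘ T)) ((1, b) ::ₘ T)) :
    HasStraightening (Ilam n i m) (fun z => X (pairRoot n z))
      (HasMargins n i Q ((a, b) ::ₘ T)) ((a, b) ::ₘ T) := by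
  obtain ⟨h1, h2, h3, h4⟩ := inR_pairRoot_iff.1 hab.1
  dsimp only at h1 h2 h3
  obtain rfl | ha := eq_or_ne a 1
  · exact h
  obtain ⟨hT, -, hQ⟩ := h.1
  refine h.subtractRoot (ν := (1, a - 1)) ⟨le_rfl, by omega, by dsimp only; omega,
    by dsimp only; omega⟩ (rootDiff_row hin (by omega) hab) ⟨?_, rfl, by simpa using hQ⟩ ?_
  · exact Multiset.forall_mem_cons.2 ⟨hab, (Multiset.forall_mem_cons.1 hT).2⟩
  · rintro ⟨x, y⟩ U γ ⟨hxyU, hfst, hQU⟩ hγ hdiff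
    obtain ⟨hxy, hU⟩ := Multiset.forall_mem_cons.1 hxyU
    obtain ⟨rfl, rfl⟩ := hdiff.row_cases hin (by omega) (by omega) hxy hγ
    refine ⟨(a, y), rfl, Multiset.forall_mem_cons.2 ⟨⟨hγ, hxy.2⟩, hU⟩, ?_, by simpa using hQU⟩
    simpa using hfst

lemma HasStraightening.of_row_one {Q : Multiset ℕ → Prop} {T U : Multiset (ℕ × ℕ)} (hin : i ≤ n)
    (hT : ∀ z ∈ T, IsLetterPair n i z)
    (h : HasStraightening (Ilam n i m) (fun z => X (pairRoot n z))
      (HasMargins n i Q (T.map (fun z => (1, z.2)) + U)) (T.map (fun z => (1, z.2)) + U)) :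
    HasStraightening (Ilam n i m) (fun z => X (pairRoot n z)) (HasMargins n i Q (T + U))
      (T + U) := by
  induction T using Multiset.induction generalizing U with
  | empty => simpa using h
  | cons z T ih =>
    obtain ⟨hz, hT⟩ := Multiset.forall_mem_cons.1 hT
    rw [Multiset.cons_add]
    refine HasStraightening.rowMove hin hz ?_
    rw [← Multiset.add_cons]
    refine ih hT ?_
    rwa [Multiset.add_cons, ← Multiset.cons_add, ← Multiset.map_cons (fun z : ℕ × ℕ => (1, z.2))]

lemma HasStraightening.of_secondLetters {Q : Multiset ℕ → Prop} {T : Multiset (ℕ × ℕ)}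
    (hin : i ≤ n) (hT : ∀ z ∈ T, IsLetterPair n i z)
    (h : HasStraightening (Ilam n i m) (fun y => X (pairRoot n (1, y)))
      (fun B => (∀ y ∈ B, IsLetterPair n i (1, y)) ∧ B.card = T.card ∧ Q B) (T.map Prod.snd)) :
    HasStraightening (Ilam n i m) (fun z => X (pairRoot n z)) (HasMargins n i Q T) T := by
  have hrow := h.map (v := fun z => X (pairRoot n z)) (e := Prod.mk 1)
    (Q := HasMargins n i Q (T.map fun z => (1, z.2))) fun B ⟨hB, hcard, hQ⟩ => by
      refine ⟨fun z hz => ?_, ?_, by simpa [Function.comp_def] using hQ⟩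
      · obtain ⟨y, hy, rfl⟩ := Multiset.mem_map.1 hz
        exact hB y hy
      · simp [hcard]
  rw [Multiset.map_map] at hrow
  simpa using HasStraightening.of_row_one (U := 0) hin hT (by simpa [Function.comp_def] using hrow)

end Moves

/-! ### The letters of the first row -/

section Column

/-- The letters `w` for which `α_{c, w - 1}` is to be subtracted in order to turn one letter `c`
into `y`. For `y = 2n + 2 - c`, which no single root reaches, the way goes through
`2n + 1 - c`. -/
def colMoves (n c y : ℕ) : Multiset ℕ :=
  if y = c then 0 else if y + c = 2 * n + 2 then {c + 1, 2 * n + 1 - c} else {y}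

/-- `B` arises from `k` letters `c` by moving single letters, once for each `w ∈ W` along the root
`α_{c, w - 1}`. -/
inductive ColReachable (n c k : ℕ) : Multiset ℕ → Multiset ℕ → Prop
  | start : ColReachable n c k 0 (Multiset.replicate k c)
  | move {W B : Multiset ℕ} {w y y' : ℕ} (h : ColReachable n c k W (y ::ₘ B))
      (hmove : ColMove n c w y y') : ColReachable n c k (w ::ₘ W) (y' ::ₘ B)

variable {n i m c k : ℕ}

lemma HasStraightening.colMove {w y y' : ℕ} {W B : Multiset ℕ} (hi : 1 ≤ i) (hin : i ≤ n)
    (hc : 2 ≤ c) (hcn : c ≤ n) (hcw : c < w) (hw : c + w ≤ 2 * n + 1)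
    (h : HasStraightening (Ilam n i m) (fun y => X (pairRoot n (1, y)))
      (fun B => (∀ y ∈ B, IsLetterPair n i (1, y)) ∧ ColReachable n c k W B) (y ::ₘ B))
    (hy' : IsLetterPair n i (1, y')) (hmove : ColMove n c w y y') :
    HasStraightening (Ilam n i m) (fun y => X (pairRoot n (1, y)))
      (fun B => (∀ y ∈ B, IsLetterPair n i (1, y)) ∧ ColReachable n c k (w ::ₘ W) B)
      (y' ::ₘ B) := by
  obtain ⟨hB, hreach⟩ := h.1
  obtain ⟨hy, hB⟩ := Multiset.forall_mem_cons.1 hB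
  refine h.subtractRoot (ν := (c, w - 1)) ⟨by omega, hcn, by dsimp only; omega,
    by dsimp only; omega⟩ (hmove.rootDiff hi hin hc hcw hw hy hy')
    ⟨Multiset.forall_mem_cons.2 ⟨hy', hB⟩, hreach.move hmove⟩ ?_
  rintro x U γ ⟨hxU, hreachU⟩ hγ hdiff
  obtain ⟨hx, hU⟩ := Multiset.forall_mem_cons.1 hxU
  obtain ⟨x', hmove', hx', rfl⟩ := hdiff.colMove hin hc hcn hcw hw hx hγ
  exact ⟨x', rfl, Multiset.forall_mem_cons.2 ⟨hx', hU⟩, hreachU.move hmove'⟩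

lemma HasStraightening.moveFrom {y : ℕ} {W B : Multiset ℕ} (hi : 1 ≤ i) (hin : i ≤ n)
    (hc : 2 ≤ c) (hcn : c ≤ n) (hcy : c ≤ y) (hy : y + c ≤ 2 * n + 2) (hy' : y + i ≤ 2 * n + 1)
    (h : HasStraightening (Ilam n i m) (fun y => X (pairRoot n (1, y)))
      (fun B => (∀ y ∈ B, IsLetterPair n i (1, y)) ∧ ColReachable n c k W B) (c ::ₘ B)) :
    HasStraightening (Ilam n i m) (fun y => X (pairRoot n (1, y)))
      (fun B => (∀ y ∈ B, IsLetterPair n i (1, y)) ∧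
        ColReachable n c k (colMoves n c y + W) B) (y ::ₘ B) := by
  unfold colMoves
  split_ifs with h1 h2
  · simpa [h1] using h
  · have hmid := h.colMove hi hin hc hcn (w := 2 * n + 1 - c) (by omega) (by omega)
      (isLetterPair_one_left hi (by omega) (by omega)) (Or.inl ⟨rfl, rfl⟩)
    rw [Multiset.insert_eq_cons, Multiset.cons_add, Multiset.singleton_add]
    exact hmid.colMove (w := c + 1) (y' := y) hi hin hc hcn (by omega) (by omega)
      (isLetterPair_one_left hi (by omega) hy') (Or.inr ⟨by omega, by omega⟩)
  · rw [Multiset.singleton_add]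
    exact h.colMove hi hin hc hcn (w := y) (by omega) (by omega)
      (isLetterPair_one_left hi (by omega) (by omega)) (Or.inl ⟨rfl, rfl⟩)

lemma HasStraightening.add_replicate {B : Multiset ℕ} {j : ℕ} (hi : 1 ≤ i) (hin : i ≤ n)
    (hc : 2 ≤ c) (hcn : c ≤ n)
    (hB : ∀ y ∈ B, c ≤ y ∧ y + c ≤ 2 * n + 2 ∧ y + i ≤ 2 * n + 1)
    (hpow : X (1, 2 * n + 1 - c) ^ k ∈ Ilam n i m) (hk : B.card + j = k) :
    HasStraightening (Ilam n i m) (fun y => X (pairRoot n (1, y)))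
      (fun B' => (∀ y ∈ B', IsLetterPair n i (1, y)) ∧
        ColReachable n c k (B.bind (colMoves n c)) B') (B + Multiset.replicate j c) := by
  induction B using Multiset.induction generalizing j with
  | empty =>
    obtain rfl : j = k := by simpa using hk
    rw [Multiset.zero_bind, zero_add]
    refine hasStraightening_of_prod_mem ⟨fun y hy => ?_, .start⟩ ?_
    · rw [Multiset.eq_of_mem_replicate hy]
      exact isLetterPair_one_left hi hc (by omega)
    · rw [Multiset.map_replicate, Multiset.prod_replicate, pairRoot, min_eq_left (by omega),
        max_eq_right (by dsimp only; omega)]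
      exact hpow
  | cons y B ih =>
    obtain ⟨⟨hcy, hy, hy'⟩, hB⟩ := Multiset.forall_mem_cons.1 hB
    rw [Multiset.cons_bind, Multiset.cons_add]
    refine HasStraightening.moveFrom hi hin hc hcn hcy hy hy' ?_
    rw [← Multiset.add_cons, ← Multiset.replicate_succ]
    exact ih hB (by rw [← hk, Multiset.card_cons]; omega)

end Column

section Balance

/-- `B` is larger than `B₀` at the largest letter whose multiplicities differ. -/
def ColexLT {α : Type*} [LinearOrder α] (B₀ B : Multiset α) : Prop :=
  ∃ w, B₀.count w < B.count w ∧ ∀ v, w < v → B.count v = B₀.count v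

variable {n c k : ℕ} {B B₀ W : Multiset ℕ}

-- `W₁` collects the moves `c → w` and `W₂` the moves `2n + 2 - w → 2n + 2 - c`.
lemma ColReachable.exists_count_balance (h : ColReachable n c k W B) :
    ∃ W₁ W₂, W₁ + W₂ = W ∧ ∀ v, 1 ≤ v → v ≤ 2 * n + 1 →
      B.count v + W₂.count (2 * n + 2 - v) + (if v = c then W₁.card else 0) =
        (if v = c then k else 0) + W₁.count v + (if v + c = 2 * n + 2 then W₂.card else 0) := by
  induction h with
  | start => exact ⟨0, 0, rfl, fun v _ _ => by simp [Multiset.count_replicate, eq_comm]⟩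
  | @move W B w y y' _ hmove ih =>
    obtain ⟨W₁, W₂, rfl, hcount⟩ := ih
    rcases hmove with ⟨rfl, rfl⟩ | ⟨rfl, rfl⟩
    · refine ⟨y' ::ₘ W₁, W₂, Multiset.cons_add .., fun v h1 h2 => ?_⟩
      have := hcount v h1 h2
      simp only [Multiset.count_cons, Multiset.card_cons] at this ⊢
      split_ifs at this ⊢ <;> omega
    · refine ⟨W₁, w ::ₘ W₂, Multiset.add_cons .., fun v h1 h2 => ?_⟩
      have := hcount v h1 h2
      simp only [Multiset.count_cons, Multiset.card_cons] at this ⊢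
      split_ifs at this ⊢ <;> omega

lemma count_bind_colMoves (hc : c ≤ n) (B₀ : Multiset ℕ) (v : ℕ) :
    (B₀.bind (colMoves n c)).count v =
      (if v = c ∨ v + c = 2 * n + 2 then 0 else B₀.count v) +
        (if v = c + 1 then B₀.count (2 * n + 2 - c) else 0) +
        (if v = 2 * n + 1 - c then B₀.count (2 * n + 2 - c) else 0) := by
  induction B₀ using Multiset.induction with
  | empty => simp
  | cons y B ih =>
    rw [Multiset.cons_bind, Multiset.count_add, ih, colMoves]
    split_ifs <;> simp [Multiset.count_cons, Multiset.count_singleton] <;> grind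

lemma card_bind_colMoves (hc : c ≤ n) (B₀ : Multiset ℕ) :
    (B₀.bind (colMoves n c)).card + B₀.count c = B₀.card + B₀.count (2 * n + 2 - c) := by
  induction B₀ using Multiset.induction with
  | empty => rfl
  | cons y B ih =>
    rw [Multiset.cons_bind, Multiset.card_add, Multiset.card_cons, Multiset.count_cons,
      Multiset.count_cons, colMoves]
    split_ifs <;> simp only [Multiset.card_zero, Multiset.insert_eq_cons, Multiset.card_cons,
      Multiset.card_singleton] <;> omega

lemma ColReachable.card_eq (h : ColReachable n c k W B) : B.card = k := by
  induction h with
  | start => exact Multiset.card_replicate ..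
  | move _ _ ih => rw [← ih, Multiset.card_cons, Multiset.card_cons]

lemma ColReachable.exists_excess (hc : 1 ≤ c) (hcn : c ≤ n)
    (h : ColReachable n c B₀.card (B₀.bind (colMoves n c)) B) :
    ∃ V : Multiset ℕ, B.count (2 * n + 2 - c) = V.card ∧
      B.count c + B₀.count (2 * n + 2 - c) = V.card + B₀.count c ∧
      ∀ v, 1 ≤ v → v ≤ 2 * n + 1 → v ≠ c → v + c ≠ 2 * n + 2 →
        B.count v + V.count v + V.count (2 * n + 2 - v) = B₀.count v +
          (if v = c + 1 then B₀.count (2 * n + 2 - c) else 0) +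
          (if v = 2 * n + 1 - c then B₀.count (2 * n + 2 - c) else 0) := by
  obtain ⟨W, V, hWV, hcount⟩ := h.exists_count_balance
  have hcard := card_bind_colMoves hcn B₀
  have hbind := count_bind_colMoves hcn B₀
  simp only [← hWV, Multiset.card_add, Multiset.count_add] at hcard hbind
  have hc₁ := hcount c hc (by omega)
  have hc₂ := hcount (2 * n + 2 - c) (by omega) (by omega)
  have hbc := hbind c
  have hbz := hbind (2 * n + 2 - c)
  rw [show 2 * n + 2 - (2 * n + 2 - c) = c by omega] at hc₂
  simp only [show ¬ c + c = 2 * n + 2 by omega, show ¬ 2 * n + 2 - c = c by omega,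
    show 2 * n + 2 - c + c = 2 * n + 2 by omega, true_or, or_true, ↓reduceIte,
    show ¬ c = c + 1 by omega, show ¬ c = 2 * n + 1 - c by omega,
    show ¬ 2 * n + 2 - c = c + 1 by omega, show ¬ 2 * n + 2 - c = 2 * n + 1 - c by omega]
    at hc₁ hc₂ hbc hbz
  refine ⟨V, by omega, by omega, fun v h1 h2 h3 h4 => ?_⟩
  have hv := hcount v h1 h2
  have hbv := hbind v
  rw [if_neg h3, if_neg h3, if_neg h4] at hv
  rw [if_neg (by tauto)] at hbv
  omega

lemma ColReachable.mem_bounds (hcn : c ≤ n) (h : ColReachable n c k W B)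
    (hW : ∀ w ∈ W, c ≤ w ∧ w + c ≤ 2 * n + 2) : ∀ y ∈ B, c ≤ y ∧ y + c ≤ 2 * n + 2 := by
  induction h with
  | start =>
    intro y hy
    have := Multiset.eq_of_mem_replicate hy
    omega
  | move _ hmove ih =>
    obtain ⟨hw, hW⟩ := Multiset.forall_mem_cons.1 hW
    refine Multiset.forall_mem_cons.2 ⟨?_, (Multiset.forall_mem_cons.1 (ih hW)).2⟩
    rcases hmove with ⟨-, rfl⟩ | ⟨-, rfl⟩ <;> omega

lemma ColReachable.count_eq_of_not_bounds (hcn : c ≤ n)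
    (h : ColReachable n c k (B₀.bind (colMoves n c)) B)
    (hB₀ : ∀ y ∈ B₀, c ≤ y ∧ y + c ≤ 2 * n + 2) {v : ℕ} (hv : ¬ (c ≤ v ∧ v + c ≤ 2 * n + 2)) :
    B.count v = B₀.count v := by
  have hW : ∀ w ∈ B₀.bind (colMoves n c), c ≤ w ∧ w + c ≤ 2 * n + 2 := fun w hw => by
    obtain ⟨y, hy, hwy⟩ := Multiset.mem_bind.1 hw
    have := hB₀ y hy
    rw [colMoves] at hwy
    split_ifs at hwy <;> simp at hwy <;> omega
  rw [Multiset.count_eq_zero_of_notMem (mt (h.mem_bounds hcn hW v) hv),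
    Multiset.count_eq_zero_of_notMem (mt (hB₀ v) hv)]

lemma ColReachable.eq_or_mem (hc : 1 ≤ c) (hcn : c ≤ n)
    (h : ColReachable n c B₀.card (B₀.bind (colMoves n c)) B)
    (hB₀ : ∀ y ∈ B₀, c ≤ y ∧ y + c < 2 * n + 2) : B = B₀ ∨ 2 * n + 2 - c ∈ B := by
  have hz : B₀.count (2 * n + 2 - c) = 0 := Multiset.count_eq_zero_of_notMem fun hmem => by
    have := hB₀ _ hmem
    omega
  obtain ⟨V, hVz, hVc, hV⟩ := h.exists_excess hc hcn
  refine or_iff_not_imp_right.2 fun hzB => Multiset.ext.2 fun v => ?_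
  replace hzB := Multiset.count_eq_zero_of_notMem hzB
  obtain rfl : V = 0 := by rw [← Multiset.card_eq_zero, ← hVz, hzB]
  simp only [hz, Multiset.count_zero, ite_self, add_zero, Multiset.card_zero, zero_add] at hVc hV
  by_cases hv : c ≤ v ∧ v + c ≤ 2 * n + 2
  swap
  · exact h.count_eq_of_not_bounds hcn (fun y hy => ⟨(hB₀ y hy).1, (hB₀ y hy).2.le⟩) hv
  obtain rfl | hvc := eq_or_ne v c
  · exact hVc
  obtain hvz | hvz := eq_or_ne (v + c) (2 * n + 2)
  · rw [show v = 2 * n + 2 - c by omega, hz, hzB]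
  · exact hV v (by omega) (by omega) hvc hvz

lemma ColReachable.eq_or_colexLT_of_add_lt (hc : 1 ≤ c) (hcn : c ≤ n)
    (h : ColReachable n c B₀.card (B₀.bind (colMoves n c)) B)
    (hB₀ : ∀ y ∈ B₀, c ≤ y ∧ y + c < 2 * n + 2) : B = B₀ ∨ ColexLT B₀ B := by
  refine (h.eq_or_mem hc hcn hB₀).imp_right fun hz => ⟨2 * n + 2 - c, ?_, fun v hv => ?_⟩
  · rw [Multiset.count_eq_zero_of_notMem fun hz' => by have := hB₀ _ hz'; omega]
    exact Multiset.count_pos.2 hz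
  · exact h.count_eq_of_not_bounds hcn (fun y hy => ⟨(hB₀ y hy).1, (hB₀ y hy).2.le⟩) (by omega)

lemma count_add_count_add_count_le {α : Type*} [DecidableEq α] {x y z : α} (hxz : x ≠ z)
    (hyz : y ≠ z) (V : Multiset α) :
    V.count x + V.count y + V.count z ≤ V.card + if x = y then V.card else 0 := by
  induction V using Multiset.induction with
  | empty => simp
  | cons a V ih =>
    simp only [Multiset.count_cons, Multiset.card_cons]
    split_ifs at ih ⊢ <;> grind

lemma ColReachable.count_le_and_eq (hc : 1 ≤ c) (hcn : c ≤ n)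
    (h : ColReachable n c B₀.card (B₀.bind (colMoves n c)) B) (hcB₀ : B₀.count c = 0)
    (hcB : B.count c = 0) :
    B.count (2 * n + 2 - c) = B₀.count (2 * n + 2 - c) ∧
      B₀.count (2 * n + 1 - c) ≤ B.count (2 * n + 1 - c) ∧
      (B₀.count (2 * n + 1 - c) = B.count (2 * n + 1 - c) →
        ∀ v, c < v → v + c < 2 * n + 2 → B.count v = B₀.count v) := by
  obtain ⟨V, hVz, hVc, hV⟩ := h.exists_excess hc hcn
  have hz : B₀.count (2 * n + 2 - c) = V.card := by omega
  rw [hz] at hV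
  have hpen := hV (2 * n + 1 - c) (by omega) (by omega) (by omega) (by omega)
  rw [if_pos rfl, show 2 * n + 2 - (2 * n + 1 - c) = c + 1 by omega] at hpen
  have hle (v : ℕ) (h1 : 2 * n + 1 - c ≠ v) (h2 : c + 1 ≠ v) :=
    count_add_count_add_count_le h1 h2 V
  refine ⟨hVz.trans hz.symm, ?_, fun heq v hcv hvc => ?_⟩
  · have := hle c (by omega) (by omega)
    omega
  have hv := hV v (by omega) (by omega) (by omega) (by omega)
  obtain rfl | h1 := eq_or_ne v (2 * n + 1 - c)
  · exact heq.symm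
  obtain rfl | h2 := eq_or_ne v (c + 1)
  · rw [show 2 * n + 2 - (c + 1) = 2 * n + 1 - c by omega, if_pos rfl, if_neg h1] at hv
    rw [if_neg (Ne.symm h1)] at hpen
    omega
  · have := hle v h1.symm h2.symm
    have := hle (2 * n + 2 - v) (by omega) (by omega)
    rw [if_neg h1, if_neg h2] at hv
    omega

lemma ColReachable.eq_or_colexLT (hc : 1 ≤ c) (hcn : c ≤ n)
    (h : ColReachable n c B₀.card (B₀.bind (colMoves n c)) B)
    (hB₀ : ∀ y ∈ B₀, c < y ∧ y + c ≤ 2 * n + 2) : B = B₀ ∨ ColexLT B₀ B := by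
  have hcB₀ : B₀.count c = 0 :=
    Multiset.count_eq_zero_of_notMem fun hmem => (hB₀ c hmem).1.false
  have hout (v : ℕ) := h.count_eq_of_not_bounds hcn
    (fun y hy => ⟨(hB₀ y hy).1.le, (hB₀ y hy).2⟩) (v := v)
  rcases Nat.eq_zero_or_pos (B.count c) with hcB | hcB
  swap
  · obtain ⟨V, hVz, hVc, -⟩ := h.exists_excess hc hcn
    exact Or.inr ⟨2 * n + 2 - c, by omega, fun v hv => hout v (by omega)⟩
  obtain ⟨hz, hle, heq⟩ := h.count_le_and_eq hc hcn hcB₀ hcB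
  have hlarge (v : ℕ) (hv : 2 * n + 2 ≤ v + c) : B.count v = B₀.count v := by
    obtain hv | hv := hv.eq_or_lt
    · rwa [show v = 2 * n + 2 - c by omega]
    · exact hout v (by omega)
  refine hle.eq_or_lt.imp (fun h => Multiset.ext.2 fun v => ?_) fun h =>
    ⟨2 * n + 1 - c, h, fun v hv => hlarge v (by omega)⟩
  obtain hv | rfl | hv := lt_trichotomy v c
  · exact hout v (by omega)
  · rw [hcB, hcB₀]
  · exact (lt_or_ge (v + c) (2 * n + 2)).elim (heq h v hv) (hlarge v)

end Balance

/-! ### Pairs with prescribed margins -/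

section Margins

section Counting

variable {β γ : Type*} [DecidableEq β] [DecidableEq γ] {T T₀ : Multiset β} {f : β → γ} {c : γ}

lemma count_filter_eq_le (h : ∀ z, f z = c → T.count z ≤ T₀.count z) :
    T.filter (fun z => c = f z) ≤ T₀.filter fun z => c = f z := by
  refine Multiset.le_iff_count.2 fun z => ?_
  rw [Multiset.count_filter, Multiset.count_filter]
  split_ifs with hz
  · exact h z hz.symm
  · rfl

lemma count_map_le_count_map (h : ∀ z, f z = c → T.count z ≤ T₀.count z) :
    (T.map f).count c ≤ (T₀.map f).count c := by
  rw [Multiset.count_map, Multiset.count_map]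
  exact Multiset.card_le_card (count_filter_eq_le h)

lemma count_map_lt_count_map (h : ∀ z, f z = c → T.count z ≤ T₀.count z) {z : β} (hz : f z = c)
    (hlt : T.count z < T₀.count z) : (T.map f).count c < (T₀.map f).count c := by
  rw [Multiset.count_map, Multiset.count_map]
  refine Multiset.card_lt_card ((count_filter_eq_le h).lt_of_ne fun heq => hlt.ne ?_)
  have hcount (U : Multiset β) : (U.filter fun z => c = f z).count z = U.count z := by
    rw [Multiset.count_filter, if_pos hz.symm]
  rw [← hcount T, heq, hcount]

end Counting

lemma exists_count_ne_of_ne {β γ : Type*} [DecidableEq β] [LinearOrder γ] {T T₀ : Multiset β}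
    (f : β → γ) (h : T ≠ T₀) :
    ∃ z, T.count z ≠ T₀.count z ∧ ∀ z', f z < f z' → T.count z' = T₀.count z' := by
  set F := (T + T₀).toFinset.filter fun z => T.count z ≠ T₀.count z with hF
  have hmem (z : β) (hz : T.count z ≠ T₀.count z) : z ∈ F := by
    rw [hF, Finset.mem_filter, Multiset.mem_toFinset, Multiset.mem_add, ← Multiset.count_pos,
      ← Multiset.count_pos]
    omega
  have hne : F.Nonempty := by
    obtain ⟨z, hz⟩ := not_forall.1 (mt Multiset.ext.2 h)
    exact ⟨z, hmem z hz⟩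
  obtain ⟨z, hz, hmax⟩ := F.exists_max_image f hne
  refine ⟨z, (Finset.mem_filter.1 hz).2, fun z' hzz' => ?_⟩
  by_contra hz'
  exact (hmax z' (hmem z' hz')).not_gt hzz'

variable {α : Type*} [LinearOrder α] {T T₀ : Multiset (α × α)} {p w : α}

/-- The order of the increasing pairs: larger maximum first, then larger minimum. It corresponds
to the reverse of `≺` under `pairRoot`. -/
def maxMin (z : α × α) : α ×ₗ α := toLex (max z.1 z.2, min z.1 z.2)

/-- Each increasing pair lies inside every pair that starts before it. -/
def IsNested (T : Multiset (α × α)) : Prop :=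
  ∀ z ∈ T, ∀ z' ∈ T, z.1 < z.2 → z'.1 < z.1 → z.2 ≤ z'.2

lemma maxMin_swap (z : α × α) : maxMin z.swap = maxMin z := by
  simp only [maxMin, Prod.fst_swap, Prod.snd_swap, max_comm, min_comm]

lemma count_map_swap (T : Multiset (α × α)) (z : α × α) :
    (T.map Prod.swap).count z = T.count z.swap := by
  rw [← Multiset.count_map_eq_count' _ T Prod.swap_injective, Prod.swap_swap]

lemma lt_maxMin_of_lt_snd {z : α × α} (h : w < z.2) : toLex (w, p) < maxMin z :=
  Prod.Lex.toLex_lt_toLex.2 (Or.inl (lt_max_of_lt_right h))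

lemma lt_maxMin_of_lt {a : α} (hpa : p < a) (hpw : p < w) : toLex (w, p) < maxMin (a, w) := by
  refine Prod.Lex.toLex_lt_toLex.2 ?_
  rcases le_or_gt a w with h | h
  · exact Or.inr ⟨(max_eq_right h).symm, lt_min hpa hpw⟩
  · exact Or.inl (lt_max_of_lt_left h)

lemma IsNested.count_le (hT₀ : IsNested T₀) (hpw : p < w)
    (hagree : ∀ z, toLex (w, p) < maxMin z → T.count z = T₀.count z)
    (hfst : T.map Prod.fst = T₀.map Prod.fst)
    (hsnd : (T₀.map Prod.snd).count w ≤ (T.map Prod.snd).count w) :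
    T₀.count (p, w) ≤ T.count (p, w) := by
  by_contra! hlt
  have hpwT₀ : (p, w) ∈ T₀ := Multiset.count_pos.1 (by omega)
  have hrow (a : α) (ha : a < p) : T.count (a, w) ≤ T₀.count (a, w) := by
    by_contra! hlt'
    refine (count_map_lt_count_map (f := Prod.fst) (c := a) ?_ rfl hlt').ne (by rw [hfst])
    rintro ⟨a, b⟩ rfl
    obtain hb | rfl | hb := lt_trichotomy b w
    · rw [Multiset.count_eq_zero_of_notMem fun hab =>
        (hT₀ _ hpwT₀ _ hab hpw ha).not_gt hb]
      exact Nat.zero_le _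
    · exact hlt'.le
    · exact (hagree _ (lt_maxMin_of_lt_snd hb)).ge
  refine (count_map_lt_count_map (f := Prod.snd) (c := w) ?_ rfl hlt).not_ge hsnd
  rintro ⟨a, w⟩ rfl
  obtain ha | rfl | ha := lt_trichotomy a p
  · exact hrow a ha
  · exact hlt.le
  · exact (hagree _ (lt_maxMin_of_lt ha hpw)).le

lemma count_snd_le_of_agree (hsnd : T.map Prod.snd = T₀.map Prod.snd ∨
      ColexLT (T₀.map Prod.snd) (T.map Prod.snd))
    (hagree : ∀ z, toLex (w, p) < maxMin z → T.count z = T₀.count z) :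
    (T₀.map Prod.snd).count w ≤ (T.map Prod.snd).count w := by
  rcases hsnd with hsnd | ⟨w₀, hw₀, hw₀'⟩
  · rw [hsnd]
  · obtain hlt | rfl | hlt := lt_trichotomy w w₀
    · refine absurd (count_map_le_count_map fun z hz => (hagree z ?_).le) hw₀.not_ge
      exact lt_maxMin_of_lt_snd (hz ▸ hlt)
    · exact hw₀.le
    · exact (hw₀' w hlt).ge

/-- `T` exceeds `T₀`, with both orders of a pair counted together, at the first pair in the order
`maxMin` where they differ. -/
def MarginLT (T₀ T : Multiset (α × α)) : Prop :=
  ∃ p w, p < w ∧ T₀.count (p, w) + T₀.count (w, p) < T.count (p, w) + T.count (w, p) ∧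
    ∀ z, toLex (w, p) < maxMin z → T.count z = T₀.count z

-- Among the fillings with given margins, the nested one is extremal: a pair of `T` further out
-- in an earlier row would have to be compensated in that row, where nestedness leaves no room.
lemma eq_or_marginLT (hT : ∀ z ∈ T, z.1 ≠ z.2) (hT₀ : ∀ z ∈ T₀, z.1 ≠ z.2)
    (hinc : IsNested T₀) (hdec : IsNested (T₀.map Prod.swap))
    (hfst : T.map Prod.fst = T₀.map Prod.fst)
    (hsnd : T.map Prod.snd = T₀.map Prod.snd ∨
      (∀ z ∈ T₀, z.1 < z.2) ∧ ColexLT (T₀.map Prod.snd) (T.map Prod.snd)) :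
    T = T₀ ∨ MarginLT T₀ T := by
  refine or_iff_not_imp_left.2 fun hne => ?_
  obtain ⟨⟨x, y⟩, hxy, hagree⟩ := exists_count_ne_of_ne maxMin hne
  have hxy' : x ≠ y := by
    rintro rfl
    rw [Multiset.count_eq_zero_of_notMem fun h => hT _ h rfl,
      Multiset.count_eq_zero_of_notMem fun h => hT₀ _ h rfl] at hxy
    exact hxy rfl
  obtain ⟨p, w, hpw, hpwxy, hmaxMin⟩ : ∃ p w, p < w ∧ ((x, y) = (p, w) ∨ (x, y) = (w, p)) ∧
      maxMin (x, y) = toLex (w, p) := by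
    rcases hxy'.lt_or_gt with h | h
    · exact ⟨x, y, h, Or.inl rfl, by simp [maxMin, h.le]⟩
    · exact ⟨y, x, h, Or.inr rfl, by simp [maxMin, h.le]⟩
  rw [hmaxMin] at hagree
  have hle : T₀.count (p, w) ≤ T.count (p, w) := hinc.count_le hpw hagree hfst
    (count_snd_le_of_agree (hsnd.imp_right And.right) hagree)
  have hle' : T₀.count (w, p) ≤ T.count (w, p) := by
    rcases hsnd with hsnd | ⟨hlt, -⟩
    · rw [← Prod.swap_prod_mk, ← count_map_swap, ← count_map_swap]
      refine hdec.count_le hpw (fun z hz => ?_) ?_ (le_of_eq ?_)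
      · rw [count_map_swap, count_map_swap, hagree _ (by rwa [maxMin_swap])]
      · simpa only [Multiset.map_map, Function.comp_def, Prod.fst_swap] using hsnd
      · simp only [Multiset.map_map, Function.comp_def, Prod.snd_swap, hfst]
    · rw [Multiset.count_eq_zero_of_notMem fun h => (hlt _ h).not_gt hpw]
      exact Nat.zero_le _
  refine ⟨p, w, hpw, ?_, hagree⟩
  rcases hpwxy with h | h <;> rw [h] at hxy <;> omega

end Margins

section ExponentOrder

variable {n i p w : ℕ} {T T₀ : Multiset (ℕ × ℕ)}

lemma IsLetterPair.max_le {z : ℕ × ℕ} (hz : IsLetterPair n i z) : max z.1 z.2 ≤ 2 * n := by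
  have := inR_pairRoot_iff.1 hz.1
  omega

lemma count_map_pairRoot (hT : ∀ z ∈ T, IsLetterPair n i z) (hpw : p < w) (hw : w ≤ 2 * n) :
    (T.map (pairRoot n)).count (p, 2 * n + 1 - w) = T.count (p, w) + T.count (w, p) := by
  induction T using Multiset.induction with
  | empty => rfl
  | cons z T ih =>
    obtain ⟨hz, hT⟩ := Multiset.forall_mem_cons.1 hT
    have := hz.max_le
    rw [Multiset.map_cons, Multiset.count_cons, Multiset.count_cons, Multiset.count_cons, ih hT]
    obtain ⟨x, y⟩ := z
    simp only [pairRoot, Prod.mk.injEq] at *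
    split_ifs <;> omega

lemma lt_maxMin_of_rootLT {z : ℕ × ℕ} (hz : max z.1 z.2 ≤ 2 * n)
    (h : rootLT (pairRoot n z) (p, 2 * n + 1 - w)) : toLex (w, p) < maxMin z := by
  refine Prod.Lex.toLex_lt_toLex.2 ?_
  simp only [rootLT, pairRoot] at h ⊢
  omega

lemma MarginLT.expLT (h : MarginLT T₀ T) (hT : ∀ z ∈ T, IsLetterPair n i z)
    (hT₀ : ∀ z ∈ T₀, IsLetterPair n i z) (hcard : T.card = T₀.card) :
    expLT (Multiset.toFinsupp (T.map (pairRoot n))) (Multiset.toFinsupp (T₀.map (pairRoot n))) := by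
  obtain ⟨p, w, hpw, hlt, hagree⟩ := h
  have hw : w ≤ 2 * n := by
    by_contra! hw
    have hout (a b : ℕ) (hab : w = a ∨ w = b) : T.count (a, b) = 0 :=
      Multiset.count_eq_zero_of_notMem fun h => by
        have := (hT _ h).max_le
        dsimp only at this
        omega
    have := hout p w (Or.inr rfl)
    have := hout w p (Or.inl rfl)
    omega
  refine Or.inr ⟨?_, (p, 2 * n + 1 - w), ?_, fun γ hγ => ?_⟩
  · refine (Multiset.toFinsupp_sum_eq _).trans (Eq.trans ?_ (Multiset.toFinsupp_sum_eq _).symm)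
    rw [Multiset.card_map, Multiset.card_map, hcard]
  · rwa [Multiset.toFinsupp_apply, Multiset.toFinsupp_apply, count_map_pairRoot hT hpw hw,
      count_map_pairRoot hT₀ hpw hw]
  · rw [Multiset.toFinsupp_apply, Multiset.toFinsupp_apply]
    have hcount (z : ℕ × ℕ) (hz : pairRoot n z = γ) : T.count z = T₀.count z := by
      by_cases hmem : z ∈ T ∨ z ∈ T₀
      · have hz' : max z.1 z.2 ≤ 2 * n :=
          hmem.elim (fun h => (hT z h).max_le) fun h => (hT₀ z h).max_le
        exact hagree z (lt_maxMin_of_rootLT hz' (hz ▸ hγ))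
      · rw [not_or] at hmem
        rw [Multiset.count_eq_zero_of_notMem hmem.1, Multiset.count_eq_zero_of_notMem hmem.2]
    exact le_antisymm (count_map_le_count_map fun z hz => (hcount z hz).le)
      (count_map_le_count_map fun z hz => (hcount z hz).ge)

end ExponentOrder

/-! ### Dyck paths -/

section DyckPaths

lemma sum_map_eq_card_toMultiset {α : Type*} {L : List α} (hL : L.Nodup) {s : α →₀ ℕ}
    (hs : ∀ a ∉ L, s a = 0) : (L.map fun a => s a).sum = (Finsupp.toMultiset s).card := by
  classical
  rw [Finsupp.card_toMultiset, Finsupp.sum_of_support_subset s (s := L.toFinset) ?_ _ (by simp),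
    List.sum_toFinset _ hL]
  · rfl
  · intro a ha
    by_contra h
    exact Finsupp.mem_support_iff.1 ha (hs a fun h' => h (List.mem_toFinset.2 h'))

lemma mem_of_mem_toMultiset {α : Type*} {L : List α} {s : α →₀ ℕ} (hs : ∀ a ∉ L, s a = 0) {a : α}
    (ha : a ∈ Finsupp.toMultiset s) : a ∈ L := by
  by_contra h
  exact Finsupp.mem_support_iff.1 ((Finsupp.mem_toMultiset s a).1 ha) (hs a h)

section Sorted

variable {α : Type*} [Preorder α] {L : List α} {a b : α}

lemma le_of_head?_eq_some (hL : L.SortedLE) (ha : L.head? = some a) (hb : b ∈ L) : a ≤ b := by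
  rw [List.head?_eq_some_head (List.ne_nil_of_mem hb), Option.some.injEq] at ha
  exact ha ▸ hL.pairwise.rel_head hb

lemma le_of_getLast?_eq_some (hL : L.SortedLE) (ha : L.getLast? = some a) (hb : b ∈ L) :
    b ≤ a := by
  rw [List.getLast?_eq_some_getLast (List.ne_nil_of_mem hb), Option.some.injEq] at ha
  exact ha ▸ hL.pairwise.rel_getLast hb

lemma le_or_le_of_mem (hL : L.SortedLE) (ha : a ∈ L) (hb : b ∈ L) : a ≤ b ∨ b ≤ a := by
  have : Std.Symm fun a b : α => a ≤ b ∨ b ≤ a := ⟨fun _ _ => Or.symm⟩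
  have hpair : L.Pairwise fun a b => a ≤ b ∨ b ≤ a := hL.pairwise.imp Or.inl
  exact List.Pairwise.forall_of_forall (R := fun a b => a ≤ b ∨ b ≤ a)
    (fun _ _ => Or.inl le_rfl) hpair ha hb

end Sorted

variable {n i : ℕ} {L L₁ L₂ : List (ℕ × ℕ)} {β : ℕ × ℕ} {A B : Multiset (ℕ × ℕ)}

lemma RootStep.lt {a b : ℕ × ℕ} (h : RootStep a b) : a < b := by
  unfold RootStep at h
  exact Prod.lt_iff.2 (by omega)

lemma sortedLT_of_isChain_rootStep (h : L.IsChain RootStep) : L.SortedLT :=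
  List.sortedLT_iff_isChain.2 (h.imp fun _ _ => RootStep.lt)

lemma snd_le_snd_of_fst_lt (hL : L.SortedLE) {a b : ℕ × ℕ} (ha : a ∈ L) (hb : b ∈ L)
    (hab : a.1 < b.1) : a.2 ≤ b.2 :=
  ((le_or_le_of_mem hL ha hb).resolve_right fun hba => hab.not_ge hba.1).2

lemma IsType1.lt_and_bounds (h : IsType1 n i L) :
    i + 1 ≤ n ∧ ((∀ β ∈ L, β.2 + i + 1 ≤ 2 * n) ∨ ∀ β ∈ L, i + 1 ≤ β.2 ∧ β.2 + i ≤ 2 * n) := by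
  obtain ⟨-, hchain, hR, hends⟩ := h
  have hsorted := (sortedLT_of_isChain_rootStep hchain).sortedLE
  rcases hends with ⟨-, hlast⟩ | ⟨hhead, hlast⟩
  · obtain ⟨h1, -, h2, -⟩ := hR _ (List.mem_of_getLast? hlast)
    refine ⟨by omega, Or.inl fun β hβ => ?_⟩
    have := (le_of_getLast?_eq_some hsorted hlast hβ).2
    dsimp only at this
    omega
  · have h1 := (le_of_head?_eq_some hsorted hhead (List.mem_of_getLast? hlast)).2
    dsimp only at h1
    refine ⟨by omega, Or.inr fun β hβ => ?_⟩
    have := (le_of_head?_eq_some hsorted hhead hβ).2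
    have := (le_of_getLast?_eq_some hsorted hlast hβ).2
    dsimp only at *
    omega

lemma IsType2.exists_bounds (h : IsType2 n i L₁ L₂) :
    ∃ j, 1 ≤ j ∧ j < i ∧ (∀ β ∈ L₁, inR n i β ∧ β.1 ≤ j ∧ β.2 + j ≤ 2 * n) ∧
      ∀ β ∈ L₂, inR n i β ∧ 2 ≤ β.1 ∧ β.1 ≤ j + 1 ∧ β.2 + j + 1 ≤ 2 * n := by
  obtain ⟨j, hj, hji, -, -, hch₁, hch₂, hR₁, hR₂, -, hhead₂, hlast₁, hlast₂, -⟩ := h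
  have hsorted₁ := (sortedLT_of_isChain_rootStep hch₁).sortedLE
  have hsorted₂ := (sortedLT_of_isChain_rootStep hch₂).sortedLE
  refine ⟨j, hj, hji, fun β hβ => ⟨hR₁ β hβ, ?_⟩, fun β hβ => ⟨hR₂ β hβ, ?_⟩⟩
  · have := le_of_getLast?_eq_some hsorted₁ hlast₁ hβ
    have := hR₁ β hβ
    simp only [Prod.le_def, inR] at *
    omega
  · have := le_of_head?_eq_some hsorted₂ hhead₂ hβ
    have := le_of_getLast?_eq_some hsorted₂ hlast₂ hβ
    have := hR₂ β hβ
    simp only [Prod.le_def, inR] at *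
    omega

/-- The two letters of a root, the smaller one first. -/
def rootLetters (n : ℕ) (β : ℕ × ℕ) : ℕ × ℕ := (β.1, 2 * n + 1 - β.2)

lemma rootLetters_fst_lt_snd (h : inR n i β) : (rootLetters n β).1 < (rootLetters n β).2 := by
  unfold inR at h
  dsimp only [rootLetters]
  omega

lemma pairRoot_rootLetters (h : inR n i β) : pairRoot n (rootLetters n β) = β := by
  have hlt := rootLetters_fst_lt_snd h
  unfold inR at h
  rw [pairRoot, min_eq_left hlt.le, max_eq_right hlt.le]
  exact Prod.ext rfl (by dsimp only [rootLetters]; omega)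

lemma isLetterPair_rootLetters (h : inR n i β) : IsLetterPair n i (rootLetters n β) := by
  refine ⟨(pairRoot_rootLetters h).symm ▸ h, ?_⟩
  unfold inR at h
  dsimp only [rootLetters]
  omega

lemma isLetterPair_swap_rootLetters (h : inR n i β) (h2 : 2 ≤ β.1) :
    IsLetterPair n i (rootLetters n β).swap :=
  ⟨by rwa [pairRoot_swap, pairRoot_rootLetters h], h2⟩

lemma isNested_map_rootLetters (hL : L.SortedLE) (hA : ∀ β ∈ A, β ∈ L) :
    IsNested (A.map (rootLetters n)) := by
  intro z hz z' hz' _ hlt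
  obtain ⟨β, hβ, rfl⟩ := Multiset.mem_map.1 hz
  obtain ⟨β', hβ', rfl⟩ := Multiset.mem_map.1 hz'
  exact Nat.sub_le_sub_left (snd_le_snd_of_fst_lt hL (hA β' hβ') (hA β hβ) hlt) _

lemma IsNested.add_map_swap {α : Type*} [LinearOrder α] {A B : Multiset (α × α)} (hA : IsNested A)
    (hB : ∀ z ∈ B, z.1 < z.2) (hAB : ∀ z ∈ A, ∀ z' ∈ B, z.1 ≤ z'.2) :
    IsNested (A + B.map Prod.swap) := by
  intro z hz z' hz' hinc hlt
  obtain hz | hz := Multiset.mem_add.1 hz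
  · obtain hz' | hz' := Multiset.mem_add.1 hz'
    · exact hA z hz z' hz' hinc hlt
    · obtain ⟨y, hy, rfl⟩ := Multiset.mem_map.1 hz'
      exact absurd hlt (hAB z hz y hy).not_gt
  · obtain ⟨y, hy, rfl⟩ := Multiset.mem_map.1 hz
    exact absurd hinc (hB y hy).not_gt

/-- The letter pairs of the roots in `A`, smaller letter first, and of those in `B`, larger letter
first. For a double Dyck path, `A` and `B` come from its two halves. -/
def pathPairs (n : ℕ) (A B : Multiset (ℕ × ℕ)) : Multiset (ℕ × ℕ) :=
  A.map (rootLetters n) + (B.map (rootLetters n)).map Prod.swap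

lemma forall_mem_pathPairs {P : ℕ × ℕ → Prop} : (∀ z ∈ pathPairs n A B, P z) ↔
    (∀ β ∈ A, P (rootLetters n β)) ∧ ∀ β ∈ B, P (rootLetters n β).swap := by
  simp only [pathPairs, Multiset.mem_add, or_imp, forall_and, Multiset.forall_mem_map_iff]

lemma map_swap_pathPairs : (pathPairs n A B).map Prod.swap = pathPairs n B A := by
  rw [pathPairs, Multiset.map_add, Multiset.map_map Prod.swap Prod.swap, Prod.swap_swap_eq,
    Multiset.map_id, add_comm, pathPairs]

lemma map_pairRoot_pathPairs (hA : ∀ β ∈ A, inR n i β) (hB : ∀ β ∈ B, inR n i β) :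
    (pathPairs n A B).map (pairRoot n) = A + B := by
  have hid {C : Multiset (ℕ × ℕ)} (hC : ∀ β ∈ C, inR n i β) :
      (C.map fun β => pairRoot n (rootLetters n β)) = C :=
    (Multiset.map_congr rfl fun β hβ => pairRoot_rootLetters (hC β hβ)).trans (Multiset.map_id' C)
  simp only [pathPairs, Multiset.map_add, Multiset.map_map, Function.comp_def, pairRoot_swap,
    hid hA, hid hB]

lemma isNested_pathPairs (hA : IsNested (A.map (rootLetters n))) (hB : ∀ β ∈ B, inR n i β)
    (hAB : ∀ β ∈ A, ∀ β' ∈ B, β.1 + β'.2 ≤ 2 * n + 1) : IsNested (pathPairs n A B) := by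
  refine hA.add_map_swap (Multiset.forall_mem_map_iff.2 fun β hβ =>
    rootLetters_fst_lt_snd (hB β hβ)) ?_
  simp only [Multiset.forall_mem_map_iff]
  exact fun β hβ β' hβ' => Nat.le_sub_of_add_le (hAB β hβ β' hβ')

end DyckPaths

section Straightening

variable {n i m c : ℕ} {s : ℕ × ℕ →₀ ℕ} {T : Multiset (ℕ × ℕ)}

lemma exists_monomial_add_mem_Ilam_of_letterPairs (hi : 1 ≤ i) (hin : i ≤ n) (hc : 2 ≤ c)
    (hcn : c ≤ n) (hTs : T.map (pairRoot n) = Finsupp.toMultiset s)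
    (hT : ∀ z ∈ T, IsLetterPair n i z) (hinc : IsNested T) (hdec : IsNested (T.map Prod.swap))
    (hTc : ∀ z ∈ T, c ≤ z.2 ∧ z.2 + c ≤ 2 * n + 2)
    (hpow : X (1, 2 * n + 1 - c) ^ (Finsupp.toMultiset s).card ∈ Ilam n i m)
    (hQ : ∀ B, (∀ y ∈ B, IsLetterPair n i (1, y)) →
      ColReachable n c (T.map Prod.snd).card ((T.map Prod.snd).bind (colMoves n c)) B →
      B = T.map Prod.snd ∨ (∀ z ∈ T, z.1 < z.2) ∧ ColexLT (T.map Prod.snd) B) :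
    ∃ g : MvPolynomial (ℕ × ℕ) ℂ, (∀ t ∈ g.support, expLT t s) ∧
      monomial s 1 + g ∈ Ilam n i m := by
  have hcard : (T.map Prod.snd).card = (Finsupp.toMultiset s).card := by
    rw [← hTs, Multiset.card_map, Multiset.card_map]
  have hletters : ∀ y ∈ T.map Prod.snd, c ≤ y ∧ y + c ≤ 2 * n + 2 ∧ y + i ≤ 2 * n + 1 :=
    fun y hy => by
      obtain ⟨z, hz, rfl⟩ := Multiset.mem_map.1 hy
      have := inR_pairRoot_iff.1 (hT z hz).1
      have := hTc z hz
      omega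
  have hcol := HasStraightening.add_replicate (j := 0) hi hin hc hcn hletters (hcard ▸ hpow)
    (add_zero _)
  rw [Multiset.replicate_zero, add_zero] at hcol
  have hpairs := HasStraightening.of_secondLetters hin hT <| hcol.mono
    (Q := fun B => (∀ y ∈ B, IsLetterPair n i (1, y)) ∧ B.card = T.card ∧ (B = T.map Prod.snd ∨
      (∀ z ∈ T, z.1 < z.2) ∧ ColexLT (T.map Prod.snd) B))
    fun B ⟨hB, hreach⟩ => ⟨hB, by simpa using hreach.card_eq, hQ B hB hreach⟩
  rw [← Finsupp.toMultiset_toFinsupp s, ← hTs]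
  refine hpairs.exists_monomial_add_mem fun U ⟨hU, hfst, hsnd⟩ => ?_
  rcases eq_or_marginLT (fun z hz => (inR_pairRoot_iff.1 (hU z hz).1).2.2.2)
    (fun z hz => (inR_pairRoot_iff.1 (hT z hz).1).2.2.2) hinc hdec hfst hsnd with rfl | hlt
  · exact Or.inl rfl
  · exact Or.inr (hlt.expLT hU hT (by simpa using congrArg Multiset.card hfst))

lemma exists_monomial_add_mem_Ilam_of_isType1 {L : List (ℕ × ℕ)} (hi : 1 ≤ i)
    (hL : IsType1 n i L) (hs : ∀ β ∉ L, s β = 0) (hsum : m < (L.map fun β => s β).sum) :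
    ∃ g : MvPolynomial (ℕ × ℕ) ℂ, (∀ t ∈ g.support, expLT t s) ∧
      monomial s 1 + g ∈ Ilam n i m := by
  obtain ⟨hin, hbounds⟩ := hL.lt_and_bounds
  obtain ⟨-, hchain, hR, -⟩ := hL
  have hsorted := sortedLT_of_isChain_rootStep hchain
  rw [sum_map_eq_card_toMultiset hsorted.nodup hs] at hsum
  have hsL (β) (hβ : β ∈ Finsupp.toMultiset s) : β ∈ L := mem_of_mem_toMultiset hs hβ
  have hsR (β) (hβ : β ∈ Finsupp.toMultiset s) : inR n i β := hR β (hsL β hβ)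
  have hempty {P : ℕ × ℕ → Prop} : ∀ β ∈ (0 : Multiset (ℕ × ℕ)), P β := by simp
  set T := pathPairs n (Finsupp.toMultiset s) 0
  have hT {P : ℕ × ℕ → Prop} (hP : ∀ β ∈ L, P (rootLetters n β)) : ∀ z ∈ T, P z :=
    forall_mem_pathPairs.2 ⟨fun β hβ => hP β (hsL β hβ), hempty⟩
  have hdec : IsNested (T.map Prod.swap) :=
    map_swap_pathPairs.symm ▸ isNested_pathPairs hempty hsR hempty
  have hletters : (∀ y ∈ T.map Prod.snd, i + 1 < y ∧ y + (i + 1) ≤ 2 * n + 2) ∨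
      ∀ y ∈ T.map Prod.snd, i + 1 ≤ y ∧ y + (i + 1) < 2 * n + 2 := by
    simp only [Multiset.forall_mem_map_iff]
    refine hbounds.imp (fun h => hT fun β hβ => ?_) fun h => hT fun β hβ => ?_
    all_goals
      have := hR β hβ
      have := h β hβ
      unfold inR at *
      dsimp only [rootLetters]
      omega
  refine exists_monomial_add_mem_Ilam_of_letterPairs hi (by omega) (by omega) hin
    (by rw [map_pairRoot_pathPairs hsR hempty, add_zero])
    (hT fun β hβ => isLetterPair_rootLetters (hR β hβ))
    (isNested_pathPairs (isNested_map_rootLetters hsorted.sortedLE hsL)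
      (hempty (P := inR n i)) (by simp)) hdec (fun z hz => ?_) ?_ fun B _ hB => Or.imp_right
      (And.intro (hT fun β hβ => rootLetters_fst_lt_snd (hR β hβ))) ?_
  · have := hletters.imp (· _ (Multiset.mem_map_of_mem _ hz)) (· _ (Multiset.mem_map_of_mem _ hz))
    omega
  · rw [show 2 * n + 1 - (i + 1) = 2 * n - i by omega]
    exact X_pow_mem_Ilam hsum
  · exact hletters.elim (hB.eq_or_colexLT (by omega) hin)
      (hB.eq_or_colexLT_of_add_lt (by omega) hin)

lemma ColReachable.eq_of_isLetterPair {B B₀ : Multiset ℕ} (hi : 2 ≤ i) (hn : 2 ≤ n)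
    (h : ColReachable n 2 B₀.card (B₀.bind (colMoves n 2)) B)
    (hB₀ : ∀ y ∈ B₀, 2 ≤ y ∧ y + 2 < 2 * n + 2) (hB : ∀ y ∈ B, IsLetterPair n i (1, y)) :
    B = B₀ := by
  refine (h.eq_or_mem one_le_two hn hB₀).resolve_right fun hmem => ?_
  have := inR_pairRoot_iff.1 (hB _ hmem).1
  omega

lemma exists_monomial_add_mem_Ilam_of_add {A B : Multiset (ℕ × ℕ)} {j : ℕ} (hn : 2 ≤ n)
    (hj : 1 ≤ j) (hji : j < i) (hin : i ≤ n) (hs : A + B = Finsupp.toMultiset s)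
    (hA : ∀ β ∈ A, inR n i β ∧ β.1 ≤ j ∧ β.2 + j ≤ 2 * n)
    (hB : ∀ β ∈ B, inR n i β ∧ 2 ≤ β.1 ∧ β.1 ≤ j + 1 ∧ β.2 + j + 1 ≤ 2 * n)
    (hAnested : IsNested (A.map (rootLetters n))) (hBnested : IsNested (B.map (rootLetters n)))
    (hsum : m * cB n i < (Finsupp.toMultiset s).card) :
    ∃ g : MvPolynomial (ℕ × ℕ) ℂ, (∀ t ∈ g.support, expLT t s) ∧
      monomial s 1 + g ∈ Ilam n i m := by
  have hAR (β) (hβ : β ∈ A) : inR n i β := (hA β hβ).1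
  have hBR (β) (hβ : β ∈ B) : inR n i β := (hB β hβ).1
  have hAB : ∀ β ∈ A, ∀ β' ∈ B, β.1 + β'.2 ≤ 2 * n + 1 ∧ β'.1 + β.2 ≤ 2 * n + 1 :=
    fun β hβ β' hβ' => by
      have := hA β hβ
      have := hB β' hβ'
      omega
  have hletters : ∀ z ∈ pathPairs n A B, 2 ≤ z.2 ∧ z.2 + 2 < 2 * n + 2 := by
    refine forall_mem_pathPairs.2 ⟨fun β hβ => ?_, fun β hβ => ?_⟩
    · have := hA β hβ
      unfold inR at this
      dsimp only [rootLetters]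
      omega
    · have := hB β hβ
      dsimp only [rootLetters, Prod.swap]
      omega
  exact exists_monomial_add_mem_Ilam_of_letterPairs (hj.trans hji.le) hin le_rfl hn
    (by rw [map_pairRoot_pathPairs hAR hBR, hs])
    (forall_mem_pathPairs.2 ⟨fun β hβ => isLetterPair_rootLetters (hAR β hβ),
      fun β hβ => isLetterPair_swap_rootLetters (hBR β hβ) (hB β hβ).2.1⟩)
    (isNested_pathPairs hAnested hBR fun β hβ β' hβ' => (hAB β hβ β' hβ').1)
    (map_swap_pathPairs.symm ▸ isNested_pathPairs hBnested hAR
      fun β hβ β' hβ' => (hAB β' hβ' β hβ).2)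
    (fun z hz => ⟨(hletters z hz).1, (hletters z hz).2.le⟩) (X_highest_pow_mem_Ilam hsum)
    fun C hC hreach => Or.inl <|
      hreach.eq_of_isLetterPair (by omega) hn (Multiset.forall_mem_map_iff.2 hletters) hC

lemma exists_monomial_add_mem_Ilam_of_isType2 {L₁ L₂ : List (ℕ × ℕ)} (hn : 2 ≤ n) (hin : i ≤ n)
    (hL : IsType2 n i L₁ L₂) (hs : ∀ β, ¬ (β ∈ L₁ ∨ β ∈ L₂) → s β = 0)
    (hsum : m * cB n i < ((L₁ ++ L₂).map fun β => s β).sum) :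
    ∃ g : MvPolynomial (ℕ × ℕ) ℂ, (∀ t ∈ g.support, expLT t s) ∧
      monomial s 1 + g ∈ Ilam n i m := by
  classical
  obtain ⟨j, hj, hji, hL₁, hL₂⟩ := hL.exists_bounds
  obtain ⟨-, -, -, -, -, hchain₁, hchain₂, -, -, -, -, -, -, hdisj⟩ := hL
  have hsorted₁ := sortedLT_of_isChain_rootStep hchain₁
  have hsorted₂ := sortedLT_of_isChain_rootStep hchain₂
  have hs' : ∀ β ∉ L₁ ++ L₂, s β = 0 := fun β hβ => hs β fun h => hβ (List.mem_append.2 h)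
  rw [sum_map_eq_card_toMultiset (hsorted₁.nodup.append hsorted₂.nodup fun β h₁ h₂ =>
    hdisj β ⟨h₁, h₂⟩) hs'] at hsum
  have hA (β) (hβ : β ∈ (Finsupp.toMultiset s).filter (· ∈ L₁)) : β ∈ L₁ :=
    (Multiset.mem_filter.1 hβ).2
  have hB (β) (hβ : β ∈ (Finsupp.toMultiset s).filter (· ∉ L₁)) : β ∈ L₂ :=
    (List.mem_append.1 (mem_of_mem_toMultiset hs' (Multiset.mem_filter.1 hβ).1)).resolve_left
      (Multiset.mem_filter.1 hβ).2
  exact exists_monomial_add_mem_Ilam_of_add hn hj hji hin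
    (Multiset.filter_add_not (· ∈ L₁) (Finsupp.toMultiset s))
    (fun β hβ => hL₁ β (hA β hβ)) (fun β hβ => hL₂ β (hB β hβ))
    (isNested_map_rootLetters hsorted₁.sortedLE hA) (isNested_map_rootLetters hsorted₂.sortedLE hB)
    hsum

end Straightening

/-- if the multi-exponent `s` is supported on a Dyck path `p ∈ D` and
`∑_{β ∈ p} s_β > M_p(m·ω_i)`, then `X^s` plus a suitable linear combination of
`≺`-smaller monomials lies in the ideal `I_{m·ω_i}`. -/
theorem monomial_straightening (n i m : ℕ) (hn : 2 ≤ n) (hi1 : 1 ≤ i) (hin : i ≤ n)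
    (s : (ℕ × ℕ) →₀ ℕ)
    (hpath :
      (∃ L, IsType1 n i L ∧ (∀ β, β ∉ L → s β = 0) ∧
        m < (L.map fun β => s β).sum) ∨
      (∃ L1 L2, IsType2 n i L1 L2 ∧ (∀ β, ¬(β ∈ L1 ∨ β ∈ L2) → s β = 0) ∧
        m * cB n i < ((L1 ++ L2).map fun β => s β).sum)) :
    ∃ g : MvPolynomial (ℕ × ℕ) ℂ, (∀ t ∈ g.support, expLT t s) ∧
      (MvPolynomial.monomial s) 1 + g ∈ Ilam n i m := by
  rcases hpath with ⟨L, hL, hs, hsum⟩ | ⟨L₁, L₂, hL, hs, hsum⟩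
  · exact exists_monomial_add_mem_Ilam_of_isType1 hi1 hL hs hsum
  · exact exists_monomial_add_mem_Ilam_of_isType2 hn hin hL hs hsum
end

section
/- For every s in Z_{>=0}^6 with s not in S(lambda), there exist complex constants c_t such that X^s + sum_{t ≺ s} c_t X^t belongs to I_lambda; consequently the images of the monomials X^s with s in S(lambda) span the quotient ring S(n^-)/I_lambda as a complex vector space. -/
/-- The six positive roots of `G₂` as vectors `(a, b) = a·α₁ + b·α₂` in the root
lattice, listed in the order `β₁ ≻ β₂ ≻ β₃ ≻ β₄ ≻ β₅ ≻ β₆`: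
`β₁ = 3α₁+2α₂, β₂ = 3α₁+α₂, β₃ = 2α₁+α₂, β₄ = α₁+α₂, β₅ = α₂, β₆ = α₁`. -/
def g2vec : Fin 6 → ℤ × ℤ := ![(3, 2), (3, 1), (2, 1), (1, 1), (0, 1), (1, 0)]

/-- The coroot pairings `λ(β_j^∨)` for `λ = m₁ω₁ + m₂ω₂` in type `G₂`. -/
def g2pair (m1 m2 : ℕ) : Fin 6 → ℕ :=
  ![m1 + 2 * m2, m1 + m2, 2 * m1 + 3 * m2, m1 + 3 * m2, m2, m1]

/-- The differential operator `∂_ν` for `G₂`: the unique `ℂ`-linear derivation of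
`S(n⁻) = ℂ[x_{-β₁},…,x_{-β₆}]` with `∂_ν x_{-β} = x_{-(β-ν)}` if `β - ν ∈ R⁺`
(difference taken in the root lattice) and `∂_ν x_{-β} = 0` otherwise. -/
noncomputable def dG2 (ν : Fin 6) :
    Derivation ℂ (MvPolynomial (Fin 6) ℂ) (MvPolynomial (Fin 6) ℂ) :=
  MvPolynomial.mkDerivation ℂ fun j =>
    letI := Classical.propDecidable
    if h : ∃ k, g2vec k = g2vec j - g2vec ν
    then MvPolynomial.X h.choose else 0

/-- The ideal `I_λ` for `G₂`: the smallest ideal of `S(n⁻)` containing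
`x_{-β}^{λ(β^∨)+1}` for every positive root `β` and stable under every `∂_ν`. -/
noncomputable def IG2 (m1 m2 : ℕ) : Ideal (MvPolynomial (Fin 6) ℂ) :=
  sInf {I | (∀ j, MvPolynomial.X j ^ (g2pair m1 m2 j + 1) ∈ I) ∧
            (∀ ν, ∀ f ∈ I, dG2 ν f ∈ I)}

/-- The lattice points `S(λ)` of the `G₂` polytope `P(λ)` (coordinates
`s 0 = s₁, …, s 5 = s₆`). -/
def SG2 (m1 m2 : ℕ) : Set (Fin 6 →₀ ℕ) :=
  {s | s 5 ≤ m1 ∧ s 4 ≤ m2 ∧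
       s 1 + s 2 + s 5 ≤ m1 + m2 ∧
       s 2 + s 3 + s 5 ≤ m1 + m2 ∧
       s 3 + s 4 + s 5 ≤ m1 + m2 ∧
       s 0 + s 1 + s 2 + s 3 + s 4 ≤ m1 + 2 * m2 ∧
       s 1 + s 2 + s 3 + s 4 + s 5 ≤ m1 + 2 * m2}

/-- The homogeneous reverse lexicographic order on multi-exponents for `G₂`:
`expLTG2 s t` means `s ≺ t`, i.e. `t ≻ s`: either the total degree of `s` is smaller,
or the degrees agree and `t_j < s_j` at the largest index `j` with `s_j ≠ t_j`. -/
def expLTG2 (s t : Fin 6 →₀ ℕ) : Prop :=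
  (∑ j, s j) < (∑ j, t j) ∨
  ((∑ j, s j) = (∑ j, t j) ∧ ∃ j, t j < s j ∧ ∀ k, j < k → s k = t k)

/-!
Every `∂_ν` sends each variable to a variable or to `0`, so its coefficients are natural numbers and
no cancellation occurs: a monomial can be followed through any sequence of derivatives of a power
`x_{-β}^N`, and all exponents that accompany it share its degree and its weight.

Starting from `x_{-β₁}^N` with `N = m₁ + 2m₂ + 1`, the operators `∂_{β₂}, …, ∂_{β₅}` reach every
monomial of degree `N`; grading and the behaviour of two exponents along the way show that it is
the leading one as soon as it misses `x_{-β₁}` or `x_{-β₆}`, which settles the violations of (6)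
and (7). Starting from `x_{-β₂}^N` with `N = m₁ + m₂ + 1`, one reaches every monomial of degree
`N` without `x_{-β₁}`, and the grading alone shows that it leads if it only involves the variables
of (3), (4) or (5). Violations of (1) and (2) are multiples of powers that lie in the ideal.
-/

namespace G2Straightening

open MvPolynomial

section Straightening

variable {σ R : Type*} {r : (σ →₀ ℕ) → (σ →₀ ℕ) → Prop}

/-- Straightening law: modulo the ideal `I`, the monomial `X^s` is a combination of monomials that
are smaller with respect to `r`. -/
def Straightens [CommSemiring R] (r : (σ →₀ ℕ) → (σ →₀ ℕ) → Prop) (I : Ideal (MvPolynomial σ R))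
    (s : σ →₀ ℕ) : Prop :=
  ∃ g : MvPolynomial σ R, (∀ t ∈ g.support, r t s) ∧ monomial s 1 + g ∈ I

lemma straightens_of_X_pow_mem [CommSemiring R] {I : Ideal (MvPolynomial σ R)} {i : σ} {n : ℕ}
    {s : σ →₀ ℕ} (h : X i ^ n ∈ I) (hs : n ≤ s i) : Straightens r I s := by
  obtain ⟨u, rfl⟩ := exists_add_of_le (Finsupp.single_le_iff.mpr hs)
  refine ⟨0, by simp, ?_⟩
  rw [add_zero, monomial_single_add]
  exact Ideal.mul_mem_right _ I h

lemma straightens_of_mem [Field R] {I : Ideal (MvPolynomial σ R)} {p : MvPolynomial σ R}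
    {s : σ →₀ ℕ} (hp : p ∈ I) (hs : s ∈ p.support) (hr : ∀ t ∈ p.support, t ≠ s → r t s) :
    Straightens r I s := by
  classical
  refine ⟨C (coeff s p)⁻¹ * p - monomial s 1, fun t ht => ?_, ?_⟩
  · rw [mem_support_iff, coeff_sub, coeff_C_mul, coeff_monomial] at ht
    have hts : t ≠ s := by
      rintro rfl
      exact ht (by rw [if_pos rfl, inv_mul_cancel₀ (mem_support_iff.mp hs), sub_self])
    rw [if_neg hts.symm, sub_zero] at ht
    exact hr t (mem_support_iff.mpr (right_ne_zero_of_mul ht)) hts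
  · rw [add_sub_cancel]
    exact Ideal.mul_mem_left _ _ hp

lemma Straightens.mono [CommSemiring R] {I : Ideal (MvPolynomial σ R)} {s s' : σ →₀ ℕ}
    (hr : ∀ s t u, r s t → r (s + u) (t + u)) (h : Straightens r I s) (hs : s ≤ s') :
    Straightens r I s' := by
  obtain ⟨u, rfl⟩ := exists_add_of_le hs
  obtain ⟨g, hg, hmem⟩ := h
  refine ⟨g * monomial u 1, fun t ht => ?_, ?_⟩
  · rw [mem_support_iff, coeff_mul_monomial', mul_one, ite_ne_right_iff] at ht
    obtain ⟨hut, hcoeff⟩ := ht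
    have := hr _ _ u (hg (t - u) (mem_support_iff.mpr hcoeff))
    rwa [tsub_add_cancel_of_le hut] at this
  · have := Ideal.mul_mem_right (monomial u (1 : R)) I hmem
    rwa [add_mul, monomial_mul, one_mul] at this

lemma mem_of_forall_monomial_mem [CommSemiring R] {N : Submodule R (MvPolynomial σ R)}
    {p : MvPolynomial σ R} (h : ∀ s ∈ p.support, monomial s 1 ∈ N) : p ∈ N := by
  rw [p.as_sum]
  refine sum_mem fun s hs => ?_
  simpa only [smul_monomial, smul_eq_mul, mul_one] using N.smul_mem (coeff s p) (h s hs)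

theorem span_mk_monomial_eq_top [CommRing R] {I : Ideal (MvPolynomial σ R)} {S : Set (σ →₀ ℕ)}
    (hr : WellFounded r) (hS : ∀ s ∉ S, Straightens r I s) :
    Submodule.span R (Ideal.Quotient.mk I '' {p | ∃ s ∈ S, p = monomial s 1}) = ⊤ := by
  set N := Submodule.span R (Ideal.Quotient.mk I '' {p | ∃ s ∈ S, p = monomial s 1})
  let π := (Ideal.Quotient.mkₐ R I).toLinearMap
  have hmonomial (s : σ →₀ ℕ) : monomial s 1 ∈ N.comap π := by
    induction s using hr.induction with
    | _ s ih =>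
    by_cases hs : s ∈ S
    · exact Submodule.subset_span ⟨_, ⟨s, hs, rfl⟩, rfl⟩
    · obtain ⟨g, hg, hmem⟩ := hS s hs
      have hπg : g ∈ N.comap π := mem_of_forall_monomial_mem fun t ht => ih t (hg t ht)
      have hzero : π (monomial s 1) + π g = 0 := by
        rw [← map_add]
        exact Ideal.Quotient.eq_zero_iff_mem.mpr hmem
      rw [Submodule.mem_comap, eq_neg_of_add_eq_zero_left hzero]
      exact neg_mem hπg
  refine eq_top_iff.mpr fun x _ => ?_
  obtain ⟨p, rfl⟩ := Ideal.Quotient.mk_surjective x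
  exact mem_of_forall_monomial_mem (N := N.comap π) fun s _ => hmonomial s

end Straightening

section ShiftDerivation

variable {σ : Type*}

/-- The derivation sending the variable `x_i` to `x_j` if `φ i = some j` and to `0` if
`φ i = none`. -/
noncomputable def shiftDerivation (R : Type*) [CommSemiring R] (φ : σ → Option σ) :
    Derivation R (MvPolynomial σ R) (MvPolynomial σ R) :=
  mkDerivation R fun i => (φ i).elim 0 X

/-- `X^t` arises from `X^s` by replacing one factor `x_i` by its image under `φ`; these are the
monomials of the derivative of `X^s`. -/
def ShiftStep (φ : σ → Option σ) (s t : σ →₀ ℕ) : Prop :=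
  ∃ u i j, φ i = some j ∧ s = u + Finsupp.single i 1 ∧ t = u + Finsupp.single j 1

lemma map_shiftDerivation {R S : Type*} [CommSemiring R] [CommSemiring S] (f : R →+* S)
    (φ : σ → Option σ) (p : MvPolynomial σ R) :
    map f (shiftDerivation R φ p) = shiftDerivation S φ (map f p) := by
  induction p using MvPolynomial.induction_on with
  | C a => simp only [map_C, derivation_C, map_zero]
  | add p q hp hq => simp only [map_add, hp, hq]
  | mul_X p i hp =>
    have hX : map f (shiftDerivation R φ (X i)) = shiftDerivation S φ (X i) := by
      cases h : φ i <;> simp [shiftDerivation, h]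
    simp only [Derivation.leibniz, map_add, map_mul, map_X, smul_eq_mul, hp, hX]

lemma mem_support_sum_nat {ι : Type*} {A : Finset ι} {f : ι → MvPolynomial σ ℕ} {t : σ →₀ ℕ} :
    t ∈ (∑ i ∈ A, f i).support ↔ ∃ i ∈ A, t ∈ (f i).support := by
  simp [coeff_sum]

lemma mem_support_shiftDerivation_monomial {φ : σ → Option σ} {s t : σ →₀ ℕ} {n : ℕ} (hn : n ≠ 0) :
    t ∈ (shiftDerivation ℕ φ (monomial s n)).support ↔ ShiftStep φ s t := by
  classical
  rw [shiftDerivation, mkDerivation_monomial, Finsupp.sum, Finset.smul_sum, mem_support_sum_nat]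
  have hterm (i : σ) (hi : s i ≠ 0) :
      t ∈ (n •
        (monomial (s - Finsupp.single i 1) (s i) • (φ i).elim (0 : MvPolynomial σ ℕ) X)).support ↔
        ∃ j, φ i = some j ∧ t = s - Finsupp.single i 1 + Finsupp.single j 1 := by
    cases φ i with
    | none => simp
    | some j => simp [X, monomial_mul, smul_monomial, coeff_monomial, hn, hi, eq_comm]
  constructor
  · rintro ⟨i, hi, ht⟩
    rw [Finsupp.mem_support_iff] at hi
    obtain ⟨j, hj, rfl⟩ := (hterm i hi).mp ht
    have hle : Finsupp.single i 1 ≤ s := Finsupp.single_le_iff.mpr (Nat.one_le_iff_ne_zero.mpr hi)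
    exact ⟨_, i, j, hj, (tsub_add_cancel_of_le hle).symm, rfl⟩
  · rintro ⟨u, i, j, hj, rfl, rfl⟩
    have hi : (u + Finsupp.single i 1 : σ →₀ ℕ) i ≠ 0 := by simp
    refine ⟨i, Finsupp.mem_support_iff.mpr hi, (hterm i hi).mpr ⟨j, hj, ?_⟩⟩
    rw [add_tsub_cancel_right]

lemma mem_support_shiftDerivation {φ : σ → Option σ} {p : MvPolynomial σ ℕ} {t : σ →₀ ℕ} :
    t ∈ (shiftDerivation ℕ φ p).support ↔ ∃ s ∈ p.support, ShiftStep φ s t := by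
  conv_lhs => rw [p.as_sum, map_sum, mem_support_sum_nat]
  exact exists_congr fun s => and_congr_right fun hs =>
    mem_support_shiftDerivation_monomial (mem_support_iff.mp hs)

/-- The ideal `I` contains a polynomial with natural number coefficients that involves `X^s`, and
in which every monomial `X^t` satisfies `P t s`. -/
def OccursIn {R : Type*} [CommSemiring R] (I : Ideal (MvPolynomial σ R))
    (P : (σ →₀ ℕ) → (σ →₀ ℕ) → Prop) (s : σ →₀ ℕ) : Prop :=
  ∃ p : MvPolynomial σ ℕ, map (Nat.castRingHom R) p ∈ I ∧ s ∈ p.support ∧ ∀ t ∈ p.support, P t s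

lemma occursIn_single_of_X_pow_mem {R : Type*} [CommSemiring R] {I : Ideal (MvPolynomial σ R)}
    {P : (σ →₀ ℕ) → (σ →₀ ℕ) → Prop} {i : σ} {n : ℕ} (h : X i ^ n ∈ I)
    (hP : P (Finsupp.single i n) (Finsupp.single i n)) : OccursIn I P (Finsupp.single i n) := by
  classical
  refine ⟨X i ^ n, by simpa using h, by simp [X_pow_eq_monomial, coeff_monomial], fun t ht => ?_⟩
  rw [X_pow_eq_monomial] at ht
  rwa [Finset.mem_singleton.mp (support_monomial_subset ht)]

lemma OccursIn.shiftStep {R : Type*} [CommSemiring R] {I : Ideal (MvPolynomial σ R)}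
    {P : (σ →₀ ℕ) → (σ →₀ ℕ) → Prop} {φ : σ → Option σ} {s s' : σ →₀ ℕ} (h : OccursIn I P s)
    (hI : ∀ f ∈ I, shiftDerivation R φ f ∈ I) (hs : ShiftStep φ s s')
    (hP : ∀ t t', P t s → ShiftStep φ t t' → P t' s') : OccursIn I P s' := by
  obtain ⟨p, hp, hsp, hpP⟩ := h
  refine ⟨shiftDerivation ℕ φ p, ?_, mem_support_shiftDerivation.mpr ⟨s, hsp, hs⟩, fun t' ht' => ?_⟩
  · rw [map_shiftDerivation]
    exact hI _ hp
  · obtain ⟨t, ht, htt'⟩ := mem_support_shiftDerivation.mp ht'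
    exact hP t t' (hpP t ht) htt'

lemma OccursIn.straightens {R : Type*} [Field R] [CharZero R] {I : Ideal (MvPolynomial σ R)}
    {P r : (σ →₀ ℕ) → (σ →₀ ℕ) → Prop} {s : σ →₀ ℕ} (h : OccursIn I P s)
    (hr : ∀ t, P t s → t ≠ s → r t s) : Straightens r I s := by
  obtain ⟨p, hp, hs, hP⟩ := h
  rw [← support_map_of_injective p (Nat.castRingHom R).injective_nat] at hs hP
  exact straightens_of_mem hp hs fun t ht => hr t (hP t ht)

end ShiftDerivation

lemma add_single_degree_induction {σ : Type*} {Q : (σ →₀ ℕ) → Prop} {i : σ} (s : σ →₀ ℕ)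
    (hQ : ∀ u, ∀ k ∈ s.support, Q (u + Finsupp.single i 1) → Q (u + Finsupp.single k 1))
    (u : σ →₀ ℕ) (h : Q (u + Finsupp.single i s.degree)) : Q (u + s) := by
  induction s using Finsupp.induction_linear generalizing u with
  | zero => simpa using h
  | add s t hs ht =>
    rw [← add_assoc]
    refine ht (fun u k hk => hQ u k (Finsupp.support_mono le_add_self hk)) _ ?_
    rw [add_right_comm]
    refine hs (fun u k hk => hQ u k (Finsupp.support_mono le_self_add hk)) _ ?_
    rwa [add_assoc, ← Finsupp.single_add, add_comm t.degree, ← map_add]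
  | single k n =>
    rw [Finsupp.degree_single] at h
    rcases eq_or_ne n 0 with rfl | hn
    · simpa using h
    have hQk := fun u => hQ u k (by simp [hn])
    clear hQ hn
    induction n generalizing u with
    | zero => simpa using h
    | succ n ih =>
      rw [Finsupp.single_add, add_comm (Finsupp.single k n), ← add_assoc]
      refine ih _ ?_
      rw [add_right_comm]
      refine hQk _ ?_
      rwa [add_assoc, ← Finsupp.single_add]


section Order

lemma expLTG2_add_right {s t : Fin 6 →₀ ℕ} (u : Fin 6 →₀ ℕ) (h : expLTG2 s t) :
    expLTG2 (s + u) (t + u) := by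
  simp only [expLTG2, Finsupp.add_apply, Finset.sum_add_distrib]
  rcases h with h | ⟨h, j, hj, hk⟩
  · exact .inl (by gcongr)
  · exact .inr ⟨by rw [h], j, by gcongr, fun k hjk => by rw [hk k hjk]⟩

-- Within a fixed degree `d`, passing from `s` to `d - s` turns the reversed comparison of entries
-- into a lexicographic comparison of natural numbers, read from the last entry.
lemma wellFounded_expLTG2 : WellFounded expLTG2 := by
  let key (s : Fin 6 →₀ ℕ) : ℕ × (Fin 6 → ℕ) := (∑ j, s j, fun k => ∑ j, s j - s k)
  have hwf : WellFounded (Prod.Lex (· < · : ℕ → ℕ → Prop)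
      (Pi.Lex (β := fun _ : Fin 6 => ℕ) (· > ·) (· < ·))) :=
    WellFounded.prod_lex wellFounded_lt (Pi.Lex.wellFounded _ fun _ => wellFounded_lt)
  refine Subrelation.wf (fun {s t} h => ?_) (InvImage.wf key hwf)
  rcases h with h | ⟨h, j, hj, hk⟩
  · exact .left _ _ h
  · refine Prod.lex_def.mpr (.inr ⟨h, j, fun k hjk => ?_, ?_⟩)
    · simp only [key, h, hk k hjk]
    · have hle : s j ≤ ∑ i, s i := Finset.single_le_sum_of_canonicallyOrdered (Finset.mem_univ j)
      simp only [key]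
      omega

lemma expLTG2_of_forall_le {s t : Fin 6 →₀ ℕ} (hdeg : t.degree = s.degree) (hne : t ≠ s)
    (hle : ∀ j, (∀ k, j < k → t k = s k) → s j ≤ t j) : expLTG2 t s := by
  rw [Finsupp.degree_eq_sum, Finsupp.degree_eq_sum] at hdeg
  obtain ⟨j, hj, hmax⟩ := (Finset.univ.filter fun j => t j ≠ s j).exists_maximal
    (by simpa [Finset.Nonempty] using DFunLike.ne_iff.mp hne)
  have hlast (k : Fin 6) (hjk : j < k) : t k = s k := by
    by_contra hk
    exact hjk.not_ge (hmax (Finset.mem_filter.mpr ⟨Finset.mem_univ k, hk⟩) hjk.le)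
  have hne_j : t j ≠ s j := (Finset.mem_filter.mp hj).2
  exact .inr ⟨hdeg, j, (hle j hlast).lt_of_ne hne_j.symm, hlast⟩

lemma Straightens.of_le_sum {R : Type*} [CommSemiring R] {I : Ideal (MvPolynomial (Fin 6) R)}
    {A : Finset (Fin 6)} {n : ℕ}
    (h : ∀ s : Fin 6 →₀ ℕ, s.degree = n → (∀ k ∉ A, s k = 0) → Straightens expLTG2 I s)
    {s : Fin 6 →₀ ℕ} (hs : n ≤ ∑ k ∈ A, s k) : Straightens expLTG2 I s := by
  have hdeg : (s.filter (· ∈ A)).degree = ∑ k ∈ A, s k := by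
    simp [Finsupp.degree_eq_sum, Finsupp.filter_apply, Finset.sum_ite_mem]
  obtain ⟨s', hle, hs'⟩ := Finsupp.exists_le_degree_eq (s.filter (· ∈ A)) n (hdeg ▸ hs)
  refine (h s' hs' fun k hk => ?_).mono (fun _ _ u => expLTG2_add_right u)
    fun k => (hle k).trans ?_
  · simpa [hk] using hle k
  · rw [Finsupp.filter_apply]
    split_ifs
    exacts [le_rfl, zero_le]

end Order

section RootShift

/-- Subtraction of the root `ν` on the positive roots of `G₂`, where defined. -/
def rootSub (ν j : Fin 6) : Option (Fin 6) :=
  Fin.find? fun k => g2vec k = g2vec j - g2vec ν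

lemma rootSub_eq_some_iff {ν j k : Fin 6} :
    rootSub ν j = some k ↔ g2vec k = g2vec j - g2vec ν := by
  revert ν j k
  decide

lemma dG2_eq_shiftDerivation (ν : Fin 6) : dG2 ν = shiftDerivation ℂ (rootSub ν) := by
  refine derivation_ext fun j => ?_
  rw [dG2, shiftDerivation, mkDerivation_X, mkDerivation_X]
  split_ifs with h
  · rw [rootSub_eq_some_iff.mpr h.choose_spec, Option.elim_some]
  · rw [Option.eq_none_iff_forall_ne_some.mpr fun k hk => h ⟨k, rootSub_eq_some_iff.mp hk⟩,
      Option.elim_none]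

/-- `X^t` and `X^s` have the same degree and the same weight. -/
def SameGrade (t s : Fin 6 →₀ ℕ) : Prop :=
  t.degree = s.degree ∧ Finsupp.weight g2vec t = Finsupp.weight g2vec s

lemma SameGrade.shiftStep {ν : Fin 6} {s s' t t' : Fin 6 →₀ ℕ} (h : SameGrade t s)
    (ht : ShiftStep (rootSub ν) t t') (hs : ShiftStep (rootSub ν) s s') : SameGrade t' s' := by
  have grade_eq {s s' : Fin 6 →₀ ℕ} (h : ShiftStep (rootSub ν) s s') :
      s'.degree = s.degree ∧
        Finsupp.weight g2vec s' = Finsupp.weight g2vec s - g2vec ν := by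
    obtain ⟨u, i, j, hij, rfl, rfl⟩ := h
    rw [rootSub_eq_some_iff] at hij
    simp [Finsupp.weight_single, hij, add_sub_assoc]
  rw [SameGrade, (grade_eq ht).1, (grade_eq hs).1, (grade_eq ht).2, (grade_eq hs).2, h.1, h.2]
  exact ⟨rfl, rfl⟩

lemma sameGrade_iff {s t : Fin 6 →₀ ℕ} : SameGrade t s ↔
    t 0 + t 1 + t 2 + t 3 + t 4 + t 5 = s 0 + s 1 + s 2 + s 3 + s 4 + s 5 ∧
    3 * t 0 + 3 * t 1 + 2 * t 2 + t 3 + t 5 = 3 * s 0 + 3 * s 1 + 2 * s 2 + s 3 + s 5 ∧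
    2 * t 0 + t 1 + t 2 + t 3 + t 4 = 2 * s 0 + s 1 + s 2 + s 3 + s 4 := by
  have weight_eq (s : Fin 6 →₀ ℕ) : Finsupp.weight g2vec s =
      (3 * (s 0 : ℤ) + 3 * s 1 + 2 * s 2 + s 3 + s 5,
        2 * (s 0 : ℤ) + s 1 + s 2 + s 3 + s 4) := by
    rw [Finsupp.weight_apply, Finsupp.sum_fintype _ _ (by simp), Fin.sum_univ_six]
    simp [g2vec, mul_comm]
  rw [SameGrade, weight_eq, weight_eq, Finsupp.degree_eq_sum, Finsupp.degree_eq_sum,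
    Fin.sum_univ_six, Fin.sum_univ_six, Prod.mk.injEq]
  norm_cast

end RootShift

section Companions

variable {R : Type*} [CommSemiring R] {I : Ideal (MvPolynomial (Fin 6) R)}

/-- The relation between the exponents `t` and a followed exponent `s` in the derivatives of a
power of `x_{-β₁}` along `∂_{β₂}, …, ∂_{β₅}`. -/
def CompanionOne (t s : Fin 6 →₀ ℕ) : Prop :=
  SameGrade t s ∧ t 4 = s 4 ∧ t 2 ≤ s 2

/-- The relation between the exponents `t` and a followed exponent `s` in the derivatives of a
power of `x_{-β₂}`. -/
def CompanionTwo (t s : Fin 6 →₀ ℕ) : Prop :=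
  SameGrade t s ∧ t 0 = 0

lemma CompanionOne.shiftStep {ν i k : Fin 6} {u t t' : Fin 6 →₀ ℕ} (hν : ν ≠ 5) (hi : i ≠ 2)
    (hik : rootSub ν i = some k) (h : CompanionOne t (u + Finsupp.single i 1))
    (ht : ShiftStep (rootSub ν) t t') : CompanionOne t' (u + Finsupp.single k 1) := by
  have rootSub_spec : ∀ ν ≠ 5, ∀ j l, rootSub ν j = some l →
      j ≠ 4 ∧ (l = 4 ↔ ν = 1) ∧ (l = 2 ↔ ν = 3 ∧ j ≠ 2) := by decide
  obtain ⟨hgrade, hfour, htwo⟩ := h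
  refine ⟨hgrade.shiftStep ht ⟨u, i, k, hik, rfl, rfl⟩, ?_⟩
  obtain ⟨v, j, l, hjl, rfl, rfl⟩ := ht
  obtain ⟨hi4, hk4, hk2⟩ := rootSub_spec ν hν i k hik
  obtain ⟨hj4, hl4, hl2⟩ := rootSub_spec ν hν j l hjl
  simp only [Finsupp.add_apply, Finsupp.single_apply, hi, hi4, hj4, hk4, hk2, hl4, hl2,
    if_false] at hfour htwo ⊢
  split_ifs at htwo ⊢ <;> omega

lemma CompanionTwo.shiftStep {ν : Fin 6} {s s' t t' : Fin 6 →₀ ℕ} (h : CompanionTwo t s)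
    (ht : ShiftStep (rootSub ν) t t') (hs : ShiftStep (rootSub ν) s s') : CompanionTwo t' s' := by
  have rootSub_ne_zero : ∀ ν j l, rootSub ν j = some l → l ≠ 0 := by decide
  refine ⟨h.1.shiftStep ht hs, ?_⟩
  have hzero := h.2
  obtain ⟨v, j, l, hjl, rfl, rfl⟩ := ht
  rw [Finsupp.add_apply, Nat.add_eq_zero_iff] at hzero
  rw [Finsupp.add_apply, hzero.1, Finsupp.single_eq_of_ne (rootSub_ne_zero ν j l hjl).symm,
    add_zero]

lemma occursIn_companionOne {s : Fin 6 →₀ ℕ}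
    (hI : ∀ ν, ∀ f ∈ I, shiftDerivation R (rootSub ν) f ∈ I) (hX : X 0 ^ s.degree ∈ I) :
    OccursIn I CompanionOne s := by
  have move {ν i k : Fin 6} (hν : ν ≠ 5) (hi : i ≠ 2) (hik : rootSub ν i = some k)
      (u : Fin 6 →₀ ℕ) (h : OccursIn I CompanionOne (u + Finsupp.single i 1)) :
      OccursIn I CompanionOne (u + Finsupp.single k 1) :=
    h.shiftStep (hI ν) ⟨u, i, k, hik, rfl, rfl⟩ fun _ _ ht => ht.shiftStep hν hi hik
  rw [← zero_add s]
  refine add_single_degree_induction (i := 0) s (fun u k _ h => ?_) 0 ?_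
  · match k with
    | 0 => exact h
    | 1 => exact move (ν := 4) (by decide) (by decide) (by decide) u h
    | 2 => exact move (ν := 3) (by decide) (by decide) (by decide) u h
    | 3 => exact move (ν := 2) (by decide) (by decide) (by decide) u h
    | 4 => exact move (ν := 1) (by decide) (by decide) (by decide) u h
    | 5 =>
      have h1 := move (ν := 4) (k := 1) (by decide) (by decide) (by decide) u h
      exact move (ν := 2) (by decide) (by decide) (by decide) u h1
  · rw [zero_add]
    exact occursIn_single_of_X_pow_mem hX ⟨⟨rfl, rfl⟩, rfl, le_rfl⟩

lemma occursIn_companionTwo {s : Fin 6 →₀ ℕ}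
    (hI : ∀ ν, ∀ f ∈ I, shiftDerivation R (rootSub ν) f ∈ I) (hX : X 1 ^ s.degree ∈ I)
    (hs : s 0 = 0) : OccursIn I CompanionTwo s := by
  have move {ν i k : Fin 6} (hik : rootSub ν i = some k)
      (u : Fin 6 →₀ ℕ) (h : OccursIn I CompanionTwo (u + Finsupp.single i 1)) :
      OccursIn I CompanionTwo (u + Finsupp.single k 1) :=
    h.shiftStep (hI ν) ⟨u, i, k, hik, rfl, rfl⟩ fun _ _ h ht =>
      h.shiftStep ht ⟨u, i, k, hik, rfl, rfl⟩
  rw [← zero_add s]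
  refine add_single_degree_induction (i := 1) s (fun u k hk h => ?_) 0 ?_
  · have move_two := move (ν := 5) (i := 1) (k := 2) (by decide) u
    have move_three := move (ν := 5) (i := 2) (k := 3) (by decide) u
    have move_four := move (ν := 5) (i := 3) (k := 4) (by decide) u
    match k with
    | 0 => exact absurd hs (Finsupp.mem_support_iff.mp hk)
    | 1 => exact h
    | 2 => exact move_two h
    | 3 => exact move_three (move_two h)
    | 4 => exact move_four (move_three (move_two h))
    | 5 => exact move (ν := 2) (by decide) u h
  · rw [zero_add]
    exact occursIn_single_of_X_pow_mem hX ⟨⟨rfl, rfl⟩, by simp⟩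

lemma CompanionOne.expLTG2 {s t : Fin 6 →₀ ℕ} (h : CompanionOne t s) (hs : s 0 = 0 ∨ s 5 = 0)
    (hne : t ≠ s) : expLTG2 t s := by
  obtain ⟨hgrade, hfour, htwo⟩ := h
  refine expLTG2_of_forall_le hgrade.1 hne fun j hj => ?_
  rw [sameGrade_iff] at hgrade
  match j with
  | 5 => omega
  | 4 => exact hfour.ge
  | 3 =>
    have h5 := hj 5 (by decide)
    omega
  | 2 =>
    have h3 := hj 3 (by decide)
    have h5 := hj 5 (by decide)
    omega
  | 0 | 1 =>
    have h2 := hj 2 (by decide)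
    have h3 := hj 3 (by decide)
    omega

lemma CompanionTwo.expLTG2 {s t : Fin 6 →₀ ℕ} (h : CompanionTwo t s) (hzero : s 0 = 0)
    (hs : s 3 = 0 ∧ s 4 = 0 ∨ s 1 = 0 ∧ s 4 = 0 ∨ s 1 = 0 ∧ s 2 = 0) (hne : t ≠ s) :
    expLTG2 t s := by
  obtain ⟨hgrade, htzero⟩ := h
  refine expLTG2_of_forall_le hgrade.1 hne fun j hj => ?_
  rw [sameGrade_iff] at hgrade
  match j with
  | 0 => exact hzero.le.trans zero_le
  | 1 | 2 =>
    have h3 := hj 3 (by decide)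
    have h4 := hj 4 (by decide)
    omega
  | 3 =>
    have h4 := hj 4 (by decide)
    omega
  | 4 | 5 => omega

end Companions

section Main

variable {K : Type*} [Field K] [CharZero K] {I : Ideal (MvPolynomial (Fin 6) K)}

lemma straightens_of_X_zero_pow_mem {s : Fin 6 →₀ ℕ}
    (hI : ∀ ν, ∀ f ∈ I, shiftDerivation K (rootSub ν) f ∈ I) (hX : X 0 ^ s.degree ∈ I)
    (hs : s 0 = 0 ∨ s 5 = 0) : Straightens expLTG2 I s :=
  (occursIn_companionOne hI hX).straightens fun _ ht => ht.expLTG2 hs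

lemma straightens_of_X_one_pow_mem {s : Fin 6 →₀ ℕ}
    (hI : ∀ ν, ∀ f ∈ I, shiftDerivation K (rootSub ν) f ∈ I) (hX : X 1 ^ s.degree ∈ I)
    (hzero : s 0 = 0) (hs : s 3 = 0 ∧ s 4 = 0 ∨ s 1 = 0 ∧ s 4 = 0 ∨ s 1 = 0 ∧ s 2 = 0) :
    Straightens expLTG2 I s :=
  (occursIn_companionTwo hI hX hzero).straightens fun _ ht => ht.expLTG2 hzero hs

theorem straightens_of_notMem_SG2 {m1 m2 : ℕ} {s : Fin 6 →₀ ℕ}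
    (hX : ∀ j, X j ^ (g2pair m1 m2 j + 1) ∈ I)
    (hI : ∀ ν, ∀ f ∈ I, shiftDerivation K (rootSub ν) f ∈ I) (hs : s ∉ SG2 m1 m2) :
    Straightens expLTG2 I s := by
  have of_zero (A : Finset (Fin 6)) (hA : 0 ∉ A ∨ 5 ∉ A)
      (h : m1 + 2 * m2 < ∑ k ∈ A, s k) : Straightens expLTG2 I s :=
    .of_le_sum (fun t ht hzero => straightens_of_X_zero_pow_mem hI (ht ▸ hX 0)
      (hA.imp (hzero 0) (hzero 5))) h
  have of_one (A : Finset (Fin 6)) (h0 : 0 ∉ A)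
      (hA : (3 ∉ A ∧ 4 ∉ A) ∨ (1 ∉ A ∧ 4 ∉ A) ∨ (1 ∉ A ∧ 2 ∉ A))
      (h : m1 + m2 < ∑ k ∈ A, s k) : Straightens expLTG2 I s :=
    .of_le_sum (fun t ht hzero => straightens_of_X_one_pow_mem hI (ht ▸ hX 1) (hzero 0 h0)
      (hA.imp (.imp (hzero 3) (hzero 4))
        (.imp (.imp (hzero 1) (hzero 4)) (.imp (hzero 1) (hzero 2))))) h
  simp only [SG2, Set.mem_ofPred_eq, not_and_or, not_le] at hs
  rcases hs with h | h | h | h | h | h | h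
  · exact straightens_of_X_pow_mem (hX 5) h
  · exact straightens_of_X_pow_mem (hX 4) h
  · exact of_one {1, 2, 5} (by decide) (by decide) (by simpa [add_assoc] using h)
  · exact of_one {2, 3, 5} (by decide) (by decide) (by simpa [add_assoc] using h)
  · exact of_one {3, 4, 5} (by decide) (by decide) (by simpa [add_assoc] using h)
  · exact of_zero {0, 1, 2, 3, 4} (by decide) (by simpa [add_assoc] using h)
  · exact of_zero {1, 2, 3, 4, 5} (by decide) (by simpa [add_assoc] using h)

end Main

lemma X_pow_mem_IG2 (m1 m2 : ℕ) (j : Fin 6) : X j ^ (g2pair m1 m2 j + 1) ∈ IG2 m1 m2 :=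
  Ideal.mem_sInf.mpr fun {_} h => h.1 j

lemma dG2_mem_IG2 {m1 m2 : ℕ} (ν : Fin 6) {f : MvPolynomial (Fin 6) ℂ} (hf : f ∈ IG2 m1 m2) :
    dG2 ν f ∈ IG2 m1 m2 :=
  Ideal.mem_sInf.mpr fun {_} h => h.2 ν f (Ideal.mem_sInf.mp hf h)

end G2Straightening

theorem g2_straightening_and_spanning_general {K : Type*} [Field K] [CharZero K] (m1 m2 : ℕ)
    (I : Ideal (MvPolynomial (Fin 6) K))
    (hX : ∀ j, MvPolynomial.X j ^ (g2pair m1 m2 j + 1) ∈ I)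
    (hI : ∀ ν, ∀ f ∈ I,
      G2Straightening.shiftDerivation K (G2Straightening.rootSub ν) f ∈ I) :
    (∀ s : Fin 6 →₀ ℕ, s ∉ SG2 m1 m2 →
      ∃ g : MvPolynomial (Fin 6) K, (∀ t ∈ g.support, expLTG2 t s) ∧
        (MvPolynomial.monomial s) 1 + g ∈ I) ∧
    Submodule.span K
        ((Ideal.Quotient.mk I) ''
          {p | ∃ s ∈ SG2 m1 m2, p = (MvPolynomial.monomial s) 1}) = ⊤ :=
  have straightens := fun _ hs => G2Straightening.straightens_of_notMem_SG2 hX hI hs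
  ⟨straightens,
    G2Straightening.span_mk_monomial_eq_top G2Straightening.wellFounded_expLTG2 straightens⟩

/-- every monomial `X^s` with `s ∉ S(λ)` equals, modulo `I_λ`, a linear
combination of `≺`-smaller monomials; consequently the images of the monomials `X^s`
with `s ∈ S(λ)` span the quotient `S(n⁻)/I_λ` as a `ℂ`-vector space. -/
theorem g2_straightening_and_spanning (m1 m2 : ℕ) :
    (∀ s : Fin 6 →₀ ℕ, s ∉ SG2 m1 m2 →
      ∃ g : MvPolynomial (Fin 6) ℂ, (∀ t ∈ g.support, expLTG2 t s) ∧
        (MvPolynomial.monomial s) 1 + g ∈ IG2 m1 m2) ∧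
    Submodule.span ℂ
        ((Ideal.Quotient.mk (IG2 m1 m2)) ''
          {p | ∃ s ∈ SG2 m1 m2, p = (MvPolynomial.monomial s) 1}) = ⊤ :=
  g2_straightening_and_spanning_general m1 m2 (IG2 m1 m2) (G2Straightening.X_pow_mem_IG2 m1 m2)
    fun ν _ hf => G2Straightening.dG2_eq_shiftDerivation ν ▸ G2Straightening.dG2_mem_IG2 ν hf
end

section
/- Let n = 3 and i in {2,3}, and identify coordinates by beta_1 = alpha_{1,5}, beta_2 = alpha_{1,4}, beta_3 = alpha_{2,4}, beta_4 = alpha_{1,3}, beta_5 = alpha_{2,3}, beta_6 = alpha_{1,2}, beta_7 = alpha_{2,2}, beta_8 = alpha_{3,3}, beta_9 = alpha_{1,1}. For every nonnegative integer m, a point s = (s_1,...,s_9) in Z_{>=0}^9 lies in S(0,m,0) (when i = 2), respectively in S(0,0,m) (when i = 3), if and only if s_j = 0 for every index j with beta_j not in R_i^+ and the restricted vector (s_beta)_{beta in R_i^+} lies in S(D, m*omega_i); i.e., for lambda = m*omega_i with i ≠ 1 the 19-inequality polytope coincides with the Dyck-path polytope P(D, m*omega_i). -/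
open scoped Pointwise

/-- The set `S(m1,m2,m3)` of lattice points of the polytope `P(λ)` attached to the
dominant integral weight `λ = m1·ω₁ + m2·ω₂ + m3·ω₃` of the simple Lie algebra of
type `B₃`.  Coordinates: `s 0 = s₁, …, s 8 = s₉`. -/
def SB3 (m1 m2 m3 : ℕ) : Set (Fin 9 → ℕ) :=
  {s |
    s 1 + s 2 + s 3 + s 7 + s 8 ≤ m1 + m2 + m3 ∧
    s 2 + s 3 + s 4 + s 7 + s 8 ≤ m1 + m2 + m3 ∧
    s 3 + s 4 + s 5 + s 7 + s 8 ≤ m1 + m2 + m3 ∧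
    s 4 + s 5 + s 6 + s 7 + s 8 ≤ m1 + m2 + m3 ∧
    s 2 + s 4 + s 7 ≤ m2 + m3 ∧
    s 4 + s 6 + s 7 ≤ m2 + m3 ∧
    s 5 + s 6 + s 8 ≤ m1 + m2 ∧
    s 6 ≤ m2 ∧
    s 7 ≤ m3 ∧
    s 8 ≤ m1 ∧
    s 2 + s 3 + s 4 + s 5 + s 6 + s 7 + s 8 ≤ m1 + 2 * m2 + m3 ∧
    s 0 + s 1 + s 2 + s 3 + s 4 + s 6 + s 8 ≤ m1 + 2 * m2 + m3 ∧
    s 0 + s 2 + s 3 + s 4 + s 5 + s 6 + s 8 ≤ m1 + 2 * m2 + m3 ∧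
    s 1 + s 2 + s 3 + s 4 + s 6 + s 7 + s 8 ≤ m1 + 2 * m2 + m3 ∧
    s 0 + s 1 + s 2 + s 3 + s 4 + s 5 + s 6 + 2 * s 8 ≤ 2 * m1 + 2 * m2 + m3 ∧
    s 1 + s 2 + s 3 + s 4 + s 5 + s 6 + s 7 + 2 * s 8 ≤ 2 * m1 + 2 * m2 + m3 ∧
    s 0 + s 1 + 2 * (s 2 + s 3 + s 4) + s 5 + s 6 + s 7 + 2 * s 8 ≤ 2 * m1 + 3 * m2 + 2 * m3 ∧
    s 1 + 2 * (s 2 + s 3 + s 4) + s 5 + s 6 + 2 * (s 7 + s 8) ≤ 2 * m1 + 3 * m2 + 2 * m3 ∧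
    s 2 + s 3 + 2 * s 4 + s 5 + s 6 + 2 * s 7 + s 8 ≤ m1 + 2 * m2 + 2 * m3}


/-- The identification of the nine coordinates of the `B₃` polytope with roots:
`β₁ = α_{1,5}, β₂ = α_{1,4}, β₃ = α_{2,4}, β₄ = α_{1,3}, β₅ = α_{2,3},
`β₆ = α_{1,2}, β₇ = α_{2,2}, β₈ = α_{3,3}, β₉ = α_{1,1}`. -/
def idxB3 : Fin 9 → ℕ × ℕ :=
  ![(1, 5), (1, 4), (2, 4), (1, 3), (2, 3), (1, 2), (2, 2), (3, 3), (1, 1)]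

/-!
For `n = 3` there are so few Dyck paths that they can be listed: four of type 1 and one of type 2
for `i = 2`, and two of type 2 for `i = 3`. For `λ = m·ω_i` the 19 inequalities reduce to the
inequalities of exactly these paths, together with the vanishing of the coordinates outside
`R_i^+`: each other inequality follows by adding some of these and dropping nonnegative terms.
A point supported on `R_i^+` corresponds to its extension by zero to all pairs `(p, q)`.
-/

section RootPath

/-- `IsRootPath n i a b L` says that `L` lists the roots of a path in `R_i^+` from `a` to `b`.
Dyck paths of type 1 and the two components of a Dyck path of type 2 are root paths with
prescribed ends. -/
def IsRootPath (n i : ℕ) (a b : ℕ × ℕ) (L : List (ℕ × ℕ)) : Prop :=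
  L.IsChain RootStep ∧ (∀ x ∈ L, inR n i x) ∧ L.head? = some a ∧ L.getLast? = some b

instance (n i : ℕ) : DecidablePred (inR n i) := fun a =>
  inferInstanceAs (Decidable (1 ≤ a.1 ∧ a.1 ≤ i ∧ i ≤ a.2 ∧ a.1 + a.2 ≤ 2 * n))

variable {n i : ℕ} {a b c : ℕ × ℕ} {L : List (ℕ × ℕ)}

theorem rootStep_iff : RootStep a b ↔ b = (a.1, a.2 + 1) ∨ b = (a.1 + 1, a.2) := by
  simp [RootStep, Prod.ext_iff]

theorem RootStep.le (h : RootStep a b) : a ≤ b := by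
  rcases rootStep_iff.1 h with rfl | rfl <;> simp [Prod.le_def]

theorem IsRootPath.inR_left (h : IsRootPath n i a b L) : inR n i a :=
  h.2.1 a (List.mem_of_mem_head? h.2.2.1)

theorem IsRootPath.inR_right (h : IsRootPath n i a b L) : inR n i b :=
  h.2.1 b (List.mem_of_mem_getLast? h.2.2.2)

theorem IsRootPath.ne_nil (h : IsRootPath n i a b L) : L ≠ [] := by
  rintro rfl
  simp [IsRootPath] at h

theorem not_isRootPath_of_not_inR (ha : ¬ inR n i a) : ¬ IsRootPath n i a b L :=
  fun h => ha h.inR_left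

theorem isRootPath_singleton : IsRootPath n i a b [c] ↔ inR n i a ∧ c = a ∧ a = b := by
  simp only [IsRootPath, List.isChain_singleton, List.mem_singleton, List.head?_cons,
    List.getLast?_singleton, Option.some.injEq]
  aesop

theorem isRootPath_cons_cons {x y : ℕ × ℕ} :
    IsRootPath n i a b (x :: y :: L) ↔
      inR n i a ∧ x = a ∧ RootStep a y ∧ IsRootPath n i y b (y :: L) := by
  simp only [IsRootPath, List.isChain_cons_cons, List.forall_mem_cons, List.head?_cons,
    List.getLast?_cons_cons, Option.some.injEq]
  aesop

theorem IsRootPath.cons (ha : inR n i a) (hac : RootStep a c) (h : IsRootPath n i c b L) :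
    IsRootPath n i a b (a :: L) := by
  obtain ⟨L', rfl⟩ := List.head?_eq_some_iff.1 h.2.2.1
  exact isRootPath_cons_cons.2 ⟨ha, rfl, hac, h⟩

theorem IsRootPath.le (h : IsRootPath n i a b L) : a ≤ b := by
  induction L generalizing a with
  | nil => exact absurd rfl h.ne_nil
  | cons x L ih =>
    cases L with
    | nil => exact (isRootPath_singleton.1 h).2.2.le
    | cons y L =>
      obtain ⟨-, -, hay, hyb⟩ := isRootPath_cons_cons.1 h
      exact hay.le.trans (ih hyb)

-- As a rewrite rule with the side condition decided, together with `not_isRootPath_of_not_inR`,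
-- this enumerates all paths between two given roots.
theorem isRootPath_iff {p q : ℕ} (ha : inR n i (p, q)) :
    IsRootPath n i (p, q) b L ↔
      (L = [(p, q)] ∧ (p, q) = b) ∨
        (∃ L', IsRootPath n i (p, q + 1) b L' ∧ L = (p, q) :: L') ∨
        ∃ L', IsRootPath n i (p + 1, q) b L' ∧ L = (p, q) :: L' := by
  constructor
  · intro h
    match L, h with
    | [], h => exact absurd rfl h.ne_nil
    | [x], h =>
      obtain ⟨-, rfl, rfl⟩ := isRootPath_singleton.1 h
      exact Or.inl ⟨rfl, rfl⟩
    | x :: y :: L', h =>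
      obtain ⟨-, rfl, hstep, hL'⟩ := isRootPath_cons_cons.1 h
      rcases rootStep_iff.1 hstep with rfl | rfl
      · exact Or.inr (Or.inl ⟨_, hL', rfl⟩)
      · exact Or.inr (Or.inr ⟨_, hL', rfl⟩)
  · rintro (⟨rfl, rfl⟩ | ⟨L', hL', rfl⟩ | ⟨L', hL', rfl⟩)
    · exact isRootPath_singleton.2 ⟨ha, rfl, rfl⟩
    · exact hL'.cons ha (rootStep_iff.2 (Or.inl rfl))
    · exact hL'.cons ha (rootStep_iff.2 (Or.inr rfl))

end RootPath

section DyckPath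

variable {n i : ℕ} {L L₁ L₂ : List (ℕ × ℕ)}

theorem isType1_iff :
    IsType1 n i L ↔ IsRootPath n i (1, i) (i, 2 * n - i - 1) L ∨
      IsRootPath n i (1, i + 1) (i, 2 * n - i) L := by
  constructor
  · rintro ⟨-, hchain, hR, hends | hends⟩
    · exact Or.inl ⟨hchain, hR, hends⟩
    · exact Or.inr ⟨hchain, hR, hends⟩
  · rintro (hL | hL)
    · exact ⟨hL.ne_nil, hL.1, hL.2.1, Or.inl hL.2.2⟩
    · exact ⟨hL.ne_nil, hL.1, hL.2.1, Or.inr hL.2.2⟩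

theorem isType2_iff :
    IsType2 n i L₁ L₂ ↔ ∃ j, 1 ≤ j ∧ j < i ∧ IsRootPath n i (1, i) (j, 2 * n - j) L₁ ∧
      IsRootPath n i (2, i) (j + 1, 2 * n - j - 1) L₂ ∧ L₁.Disjoint L₂ := by
  constructor
  · rintro ⟨j, hj₁, hj₂, -, -, hchain₁, hchain₂, hR₁, hR₂, hhead₁, hhead₂, hlast₁, hlast₂, hdisj⟩
    exact ⟨j, hj₁, hj₂, ⟨hchain₁, hR₁, hhead₁, hlast₁⟩, ⟨hchain₂, hR₂, hhead₂, hlast₂⟩,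
      fun x hx₁ hx₂ => hdisj x ⟨hx₁, hx₂⟩⟩
  · rintro ⟨j, hj₁, hj₂, h₁, h₂, hdisj⟩
    exact ⟨j, hj₁, hj₂, h₁.ne_nil, h₂.ne_nil, h₁.1, h₂.1, h₁.2.1, h₂.2.1, h₁.2.2.1, h₂.2.2.1,
      h₁.2.2.2, h₂.2.2.2, fun x hx => hdisj hx.1 hx.2⟩

theorem not_isType1_of_le (h : n ≤ i) : ¬ IsType1 n i L := by
  rw [isType1_iff]
  rintro (hL | hL)
  · have : i ≤ 2 * n - i - 1 := hL.inR_right.2.2.1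
    have : 1 ≤ i := hL.inR_right.1
    omega
  · have : i + 1 ≤ 2 * n - i := hL.le.2
    omega

theorem isType1_three_two_iff :
    IsType1 3 2 L ↔ L = [(1, 2), (1, 3), (2, 3)] ∨ L = [(1, 2), (2, 2), (2, 3)] ∨
      L = [(1, 3), (1, 4), (2, 4)] ∨ L = [(1, 3), (2, 3), (2, 4)] := by
  simp (disch := decide) [isType1_iff, isRootPath_iff, not_isRootPath_of_not_inR, or_assoc]

theorem isType2_three_two_iff :
    IsType2 3 2 L₁ L₂ ↔
      L₁ = [(1, 2), (1, 3), (1, 4), (1, 5)] ∧ L₂ = [(2, 2), (2, 3), (2, 4)] := by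
  have hfst : IsRootPath 3 2 (1, 2) (1, 5) L₁ ↔ L₁ = [(1, 2), (1, 3), (1, 4), (1, 5)] := by
    simp (disch := decide) [isRootPath_iff, not_isRootPath_of_not_inR]
  have hsnd : IsRootPath 3 2 (2, 2) (2, 4) L₂ ↔ L₂ = [(2, 2), (2, 3), (2, 4)] := by
    simp (disch := decide) [isRootPath_iff, not_isRootPath_of_not_inR]
  rw [isType2_iff]
  constructor
  · rintro ⟨j, hj₁, hj₂, h₁, h₂, -⟩
    obtain rfl : j = 1 := by omega
    exact ⟨hfst.1 h₁, hsnd.1 h₂⟩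
  · rintro ⟨h₁, h₂⟩
    exact ⟨1, le_rfl, one_lt_two, hfst.2 h₁, hsnd.2 h₂, by simp [h₁, h₂]⟩

theorem isType2_three_three_iff :
    IsType2 3 3 L₁ L₂ ↔
      (L₁ = [(1, 3), (1, 4), (1, 5)] ∧ L₂ = [(2, 3), (2, 4)]) ∨
        (L₁ = [(1, 3), (1, 4), (2, 4)] ∧ L₂ = [(2, 3), (3, 3)]) := by
  have hfst_one : IsRootPath 3 3 (1, 3) (1, 5) L₁ ↔ L₁ = [(1, 3), (1, 4), (1, 5)] := by
    simp (disch := decide) [isRootPath_iff, not_isRootPath_of_not_inR]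
  have hsnd_one : IsRootPath 3 3 (2, 3) (2, 4) L₂ ↔ L₂ = [(2, 3), (2, 4)] := by
    simp (disch := decide) [isRootPath_iff, not_isRootPath_of_not_inR]
  have hfst_two : IsRootPath 3 3 (1, 3) (2, 4) L₁ ↔
      L₁ = [(1, 3), (1, 4), (2, 4)] ∨ L₁ = [(1, 3), (2, 3), (2, 4)] := by
    simp (disch := decide) [isRootPath_iff, not_isRootPath_of_not_inR]
  have hsnd_two : IsRootPath 3 3 (2, 3) (3, 3) L₂ ↔ L₂ = [(2, 3), (3, 3)] := by
    simp (disch := decide) [isRootPath_iff, not_isRootPath_of_not_inR]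
  rw [isType2_iff]
  constructor
  · rintro ⟨j, hj₁, hj₂, h₁, h₂, hdisj⟩
    obtain rfl | rfl : j = 1 ∨ j = 2 := by omega
    · exact Or.inl ⟨hfst_one.1 h₁, hsnd_one.1 h₂⟩
    · obtain rfl := hsnd_two.1 h₂
      have hmem : (2, 3) ∉ L₁ := fun h => hdisj h (by simp)
      rcases hfst_two.1 h₁ with rfl | rfl
      · exact Or.inr ⟨rfl, rfl⟩
      · simp at hmem
  · rintro (⟨h₁, h₂⟩ | ⟨h₁, h₂⟩)
    · exact ⟨1, by decide, by decide, hfst_one.2 h₁, hsnd_one.2 h₂, by simp [h₁, h₂]⟩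
    · exact ⟨2, by decide, by decide, hfst_two.2 (Or.inl h₁), hsnd_two.2 h₂, by simp [h₁, h₂]⟩

end DyckPath

section Polytope

variable {m : ℕ} {s : Fin 9 → ℕ} {t : ℕ × ℕ → ℕ}

theorem mem_SD_three_two_iff :
    t ∈ SD 3 2 m ↔ (∀ β, ¬ inR 3 2 β → t β = 0) ∧
      t (1, 2) + t (1, 3) + t (2, 3) ≤ m ∧
      t (1, 2) + t (2, 2) + t (2, 3) ≤ m ∧
      t (1, 3) + t (1, 4) + t (2, 4) ≤ m ∧
      t (1, 3) + t (2, 3) + t (2, 4) ≤ m ∧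
      t (1, 2) + t (1, 3) + t (1, 4) + t (1, 5) + t (2, 2) + t (2, 3) + t (2, 4) ≤ 2 * m := by
  simp [SD, isType1_three_two_iff, isType2_three_two_iff, cB, add_assoc, and_assoc, mul_comm m]

theorem mem_SD_three_three_iff :
    t ∈ SD 3 3 m ↔ (∀ β, ¬ inR 3 3 β → t β = 0) ∧
      t (1, 3) + t (1, 4) + t (1, 5) + t (2, 3) + t (2, 4) ≤ m ∧
      t (1, 3) + t (1, 4) + t (2, 4) + t (2, 3) + t (3, 3) ≤ m := by
  simp [SD, not_isType1_of_le, isType2_three_three_iff, cB, add_assoc, or_imp, forall_and]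

theorem forall_not_inR_three_two_iff :
    (∀ j, ¬ inR 3 2 (idxB3 j) → s j = 0) ↔ s 7 = 0 ∧ s 8 = 0 := by
  simp [Fin.forall_fin_succ, idxB3, inR]

theorem forall_not_inR_three_three_iff :
    (∀ j, ¬ inR 3 3 (idxB3 j) → s j = 0) ↔ s 5 = 0 ∧ s 6 = 0 ∧ s 8 = 0 := by
  simp [Fin.forall_fin_succ, idxB3, inR]

theorem mem_SB3_zero_right_iff :
    s ∈ SB3 0 m 0 ↔ (∀ j, ¬ inR 3 2 (idxB3 j) → s j = 0) ∧
      s 5 + s 3 + s 4 ≤ m ∧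
      s 5 + s 6 + s 4 ≤ m ∧
      s 3 + s 1 + s 2 ≤ m ∧
      s 3 + s 4 + s 2 ≤ m ∧
      s 5 + s 3 + s 1 + s 0 + s 6 + s 4 + s 2 ≤ 2 * m := by
  simp only [forall_not_inR_three_two_iff, SB3, Set.mem_ofPred_eq]
  omega

theorem mem_SB3_zero_zero_iff :
    s ∈ SB3 0 0 m ↔ (∀ j, ¬ inR 3 3 (idxB3 j) → s j = 0) ∧
      s 3 + s 1 + s 0 + s 4 + s 2 ≤ m ∧
      s 3 + s 1 + s 2 + s 4 + s 7 ≤ m := by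
  simp only [forall_not_inR_three_three_iff, SB3, Set.mem_ofPred_eq]
  omega

theorem mem_SD_three_two_iff_comp_mem_SB3 :
    t ∈ SD 3 2 m ↔ (∀ β, ¬ inR 3 2 β → t β = 0) ∧ t ∘ idxB3 ∈ SB3 0 m 0 := by
  rw [mem_SD_three_two_iff, mem_SB3_zero_right_iff]
  exact and_congr_right fun ht => (and_iff_right fun j => ht (idxB3 j)).symm

theorem mem_SD_three_three_iff_comp_mem_SB3 :
    t ∈ SD 3 3 m ↔ (∀ β, ¬ inR 3 3 β → t β = 0) ∧ t ∘ idxB3 ∈ SB3 0 0 m := by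
  rw [mem_SD_three_three_iff, mem_SB3_zero_zero_iff]
  exact and_congr_right fun ht => (and_iff_right fun j => ht (idxB3 j)).symm

theorem idxB3_injective : Function.Injective idxB3 := by decide

end Polytope

section ExtendByZero

variable {α β M : Type*} [Zero M] {f : α → β} {g : α → M} {P : β → Prop}

theorem extend_zero_apply_eq_zero (hg : ∀ a, ¬ P (f a) → g a = 0) {b : β} (hb : ¬ P b) :
    Function.extend f g 0 b = 0 := by
  classical
  by_cases h : ∃ a, f a = b
  · rw [Function.extend_def, dif_pos h]
    exact hg _ (h.choose_spec.symm ▸ hb)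
  · exact Function.extend_apply' _ _ _ h

theorem mem_iff_exists_mem_of_mem_iff_comp {S : Set (α → M)} {T : Set (β → M)}
    (hf : Function.Injective f) (hS : ∀ g ∈ S, ∀ a, ¬ P (f a) → g a = 0)
    (hT : ∀ t, t ∈ T ↔ (∀ b, ¬ P b → t b = 0) ∧ t ∘ f ∈ S) :
    g ∈ S ↔ (∀ a, ¬ P (f a) → g a = 0) ∧ ∃ t ∈ T, ∀ a, t (f a) = g a := by
  constructor
  · intro hg
    have hcomp : Function.extend f g 0 ∘ f = g := Function.extend_comp hf g 0
    have hmem : Function.extend f g 0 ∈ T :=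
      (hT _).2 ⟨fun _ => extend_zero_apply_eq_zero (hS g hg), hcomp.symm ▸ hg⟩
    exact ⟨hS g hg, _, hmem, congrFun hcomp⟩
  · rintro ⟨-, t, ht, htg⟩
    have hcomp : t ∘ f = g := funext htg
    exact hcomp ▸ ((hT t).1 ht).2

end ExtendByZero

/-- for `n = 3` and `i ∈ {2,3}`, the 19-inequality `B₃` polytope for
`λ = m·ω_i` coincides with the Dyck-path polytope `P(D, m·ω_i)`: a point `s` lies in
`S(0,m,0)` (resp. `S(0,0,m)`) iff `s_j = 0` whenever `β_j ∉ R_i⁺` and the restriction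
of `s` to `R_i⁺` lies in `S(D, m·ω_i)`. -/
theorem SB3_eq_SD (i m : ℕ) (hi : i = 2 ∨ i = 3) (s : Fin 9 → ℕ) :
    s ∈ SB3 0 (if i = 2 then m else 0) (if i = 3 then m else 0) ↔
      ((∀ j, ¬ inR 3 i (idxB3 j) → s j = 0) ∧
        ∃ t ∈ SD 3 i m, ∀ j, t (idxB3 j) = s j) := by
  rcases hi with rfl | rfl
  · exact mem_iff_exists_mem_of_mem_iff_comp idxB3_injective
      (fun _ hs => (mem_SB3_zero_right_iff.1 hs).1) fun _ => mem_SD_three_two_iff_comp_mem_SB3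
  · exact mem_iff_exists_mem_of_mem_iff_comp idxB3_injective
      (fun _ hs => (mem_SB3_zero_zero_iff.1 hs).1) fun _ => mem_SD_three_three_iff_comp_mem_SB3
end
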